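/- arXiv:2003.03656 — 4 statements merged into one kernel-verified Lean document; each statement's English description precedes it below -/
import Mathlib

section
/- For every δ ∈ (0,1) there exist a constant c = c(δ) > 0 and q₀ such that for every prime power q ≥ q₀ and every real p with q^{−3/2} < p < 1, a p-random subset Q of F² satisfies a(Q) ≥ c · q^{1/2} with probability at least 1 − δ. -/
/-! The arc is found by deletion inside a set of points adapted to `p`. The `q` translates
`y = x² + a` of a parabola are disjoint arcs, and a line meets each of them in at most two points.
Hence the union `P` of `n + 1` of them has `(n + 1)q` points and no `2n + 3` collinear ones, so it
has at most `2n|P|²` collinear triples. For `n = ⌊ε / (√q p)⌋` the random part of `P` has at least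
`ε√q` points on average, while its expected number of collinear triples is only `O(ε²)` times its
expected number of points. By Chebyshev's inequality for the points and Markov's inequality for the
triples, with high probability removing a point from each triple leaves an arc of size at least
`ε√q / 4`. -/

open Finset MeasureTheory
open scoped NNReal ENNReal

/-- A set `P` in the affine plane over `F` is an arc if it contains no three
distinct collinear points. -/
def IsArc (F : Type*) [Field F] (P : Set (F × F)) : Prop :=
  ∀ a ∈ P, ∀ b ∈ P, ∀ c ∈ P,
    a ≠ b → a ≠ c → b ≠ c → ¬ Collinear F ({a, b, c} : Set (F × F))

/-- `numArcs F k` is the number of `k`-element arcs in `F²`. -/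
noncomputable def numArcs (F : Type*) [Field F] [Fintype F] (k : ℕ) : ℕ :=
  Nat.card {s : Finset (F × F) // s.card = k ∧ IsArc F ↑s}

/-- `maxArc F P` is the maximum cardinality of an arc contained in `P`. -/
noncomputable def maxArc (F : Type*) [Field F] (P : Finset (F × F)) : ℕ :=
  sSup {k : ℕ | ∃ s : Finset (F × F), s ⊆ P ∧ s.card = k ∧ IsArc F ↑s}

/-- `numCollinearTriples F P` is the number of 3-element collinear subsets of `P`. -/
noncomputable def numCollinearTriples (F : Type*) [Field F] (P : Finset (F × F)) : ℕ :=
  Nat.card {s : Finset (F × F) // s ⊆ P ∧ s.card = 3 ∧ Collinear F (↑s : Set (F × F))}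

/-- `P` contains no `l` distinct collinear points. -/
def NoLCollinear (F : Type*) [Field F] (l : ℕ) (P : Finset (F × F)) : Prop :=
  ∀ s : Finset (F × F), s ⊆ P → s.card = l → ¬ Collinear F (↑s : Set (F × F))

/-- The product Bernoulli(p) measure on subsets of `F²` (encoded as functions
`F × F → Bool`): each point is included independently with probability `p`. -/
noncomputable def randomMeasure (F : Type*) [Field F] [Fintype F] (p : ℝ≥0) (hp : p ≤ 1) :
    Measure ((F × F) → Bool) :=
  Measure.pi fun _ => (PMF.bernoulli p (by exact_mod_cast hp)).toMeasure

/-- The subset of `F²` corresponding to an indicator function `Q : F × F → Bool`. -/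
noncomputable def toSubset {F : Type*} [Field F] [Fintype F] (Q : (F × F) → Bool) :
    Finset (F × F) := Finset.univ.filter fun x => Q x = true

/-- `L` is an affine line in `F²`, i.e. the affine span of two distinct points. -/
def IsAffineLine (F : Type*) [Field F] (L : Set (F × F)) : Prop :=
  ∃ a b : F × F, a ≠ b ∧ L = (affineSpan F {a, b} : Set (F × F))

open ProbabilityTheory

section Geometry

variable {F : Type*} [Field F]

/-- The set of collinear triples of `P`: a finset with `numCollinearTriples F P` elements, over
which one can sum. -/
noncomputable def collinearTriples (F : Type*) [Field F] (P : Finset (F × F)) :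
    Finset (Finset (F × F)) :=
  open scoped Classical in {T ∈ P.powersetCard 3 | Collinear F (T : Set (F × F))}

lemma mem_collinearTriples {P T : Finset (F × F)} :
    T ∈ collinearTriples F P ↔ T ⊆ P ∧ #T = 3 ∧ Collinear F (T : Set (F × F)) := by
  simp only [collinearTriples, mem_filter, mem_powersetCard, and_assoc]

lemma card_collinearTriples (P : Finset (F × F)) :
    #(collinearTriples F P) = numCollinearTriples F P :=
  (Nat.subtype_card _ fun _ => mem_collinearTriples).symm

lemma collinearTriples_inter [DecidableEq F] (P R : Finset (F × F)) :
    collinearTriples F (P ∩ R) = {T ∈ collinearTriples F P | T ⊆ R} := by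
  ext T
  simp only [mem_filter, mem_collinearTriples, subset_inter_iff]
  tauto

lemma IsArc.card_le_maxArc {s P : Finset (F × F)} (hs : IsArc F (s : Set (F × F)))
    (hsP : s ⊆ P) : #s ≤ maxArc F P :=
  le_csSup ⟨#P, by rintro _ ⟨t, ht, rfl, -⟩; exact card_le_card ht⟩ ⟨s, hsP, rfl, hs⟩

lemma IsArc.card_le_two_of_collinear {T : Finset (F × F)} (hT : IsArc F (T : Set (F × F)))
    (hcol : Collinear F (T : Set (F × F))) : #T ≤ 2 := by
  by_contra! h
  obtain ⟨a, ha, b, hb, c, hc, hab, hac, hbc⟩ := two_lt_card.1 h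
  refine hT a ha b hb c hc hab hac hbc (hcol.subset ?_)
  simp [Set.insert_subset_iff, ha, hb, hc]

lemma IsArc.mono {P R : Set (F × F)} (hP : IsArc F P) (h : R ⊆ P) : IsArc F R :=
  fun a ha b hb c hc => hP a (h ha) b (h hb) c (h hc)

/-- Deletion: removing one point from each collinear triple of `P` leaves an arc. -/
lemma exists_isArc_card_le (P : Finset (F × F)) :
    ∃ s ⊆ P, IsArc F (s : Set (F × F)) ∧ #P ≤ #s + numCollinearTriples F P := by
  classical
  have hpoint : ∀ T ∈ collinearTriples F P, ∃ x, x ∈ T := fun T hT =>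
    card_pos.1 (by rw [(mem_collinearTriples.1 hT).2.1]; norm_num)
  choose! f hf using hpoint
  set deleted := (collinearTriples F P).image f
  refine ⟨P \ deleted, sdiff_subset, fun a ha b hb c hc hab hac hbc hcol => ?_, ?_⟩
  · rw [mem_coe, mem_sdiff] at ha hb hc
    have hT : {a, b, c} ∈ collinearTriples F P := by
      simp [mem_collinearTriples, insert_subset_iff, ha.1, hb.1, hc.1, hcol,
        card_eq_three.2 ⟨a, b, c, hab, hac, hbc, rfl⟩]
    have hdel : f {a, b, c} ∈ deleted := mem_image_of_mem f hT
    have hfT := hf _ hT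
    simp only [mem_insert, mem_singleton] at hfT
    rcases hfT with h | h | h <;> rw [h] at hdel
    exacts [ha.2 hdel, hb.2 hdel, hc.2 hdel]
  · calc #P ≤ #(P \ deleted) + #deleted := card_le_card_sdiff_add_card
      _ ≤ #(P \ deleted) + numCollinearTriples F P := by
        rw [← card_collinearTriples]
        gcongr
        exact card_image_le

lemma noLCollinear_biUnion [DecidableEq F] {ι : Type*} {I : Finset ι} {A : ι → Finset (F × F)}
    (hA : ∀ i ∈ I, IsArc F (A i : Set (F × F))) : NoLCollinear F (2 * #I + 1) (I.biUnion A) := by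
  intro T hT hcard hcol
  have hcover : I.biUnion (fun i => T ∩ A i) = T := by
    rw [← inter_biUnion, inter_eq_left.2 hT]
  have hle : #T ≤ #I * 2 := by
    nth_rw 1 [← hcover]
    refine card_biUnion_le_card_mul _ _ _ fun i hi => IsArc.card_le_two_of_collinear
      ((hA i hi).mono ?_) (hcol.subset ?_)
    · simp
    · simp
  omega

lemma collinear_insert_insert_of_forall_collinear {a b : F × F} {U : Set (F × F)} (hab : a ≠ b)
    (hU : ∀ c ∈ U, Collinear F {a, b, c}) : Collinear F (insert a (insert b U)) := by
  have hline : insert a (insert b U) ⊆ (affineSpan F {a, b} : Set (F × F)) := by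
    refine Set.insert_subset (left_mem_affineSpan_pair F a b)
      (Set.insert_subset (right_mem_affineSpan_pair F a b) fun c hc => ?_)
    exact (hU c hc).mem_affineSpan_of_mem_of_ne (by simp) (by simp) (by simp) hab
  refine Collinear.subset hline ?_
  rw [Collinear, ← direction_affineSpan, AffineSubspace.affineSpan_coe, direction_affineSpan]
  exact collinear_pair F a b

lemma NoLCollinear.card_le_of_forall_collinear {l : ℕ} {P : Finset (F × F)}
    (hP : NoLCollinear F (l + 3) P) {a b : F × F} (ha : a ∈ P) (hb : b ∈ P) (hab : a ≠ b)
    {U : Finset (F × F)} (hUP : U ⊆ P) (hU : ∀ c ∈ U, c ≠ a ∧ c ≠ b ∧ Collinear F {a, b, c}) :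
    #U ≤ l := by
  classical
  by_contra! h
  obtain ⟨V, hVU, hV⟩ := exists_subset_card_eq (Nat.succ_le_of_lt h)
  have hbV : b ∉ V := fun hbV => (hU b (hVU hbV)).2.1 rfl
  have haV : a ∉ insert b V := by
    simpa [hab] using fun haV => (hU a (hVU haV)).1 rfl
  refine hP (insert a (insert b V)) ?_ ?_ ?_
  · exact insert_subset ha (insert_subset hb (hVU.trans hUP))
  · rw [card_insert_of_notMem haV, card_insert_of_notMem hbV, hV]
  · simpa using collinear_insert_insert_of_forall_collinear (U := V) hab
      fun c hc => (hU c (hVU hc)).2.2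

/-- Each of the at most `#P ^ 2` pairs of points is completed to a collinear triple by at most `l`
further points. -/
lemma NoLCollinear.numCollinearTriples_le {l : ℕ} {P : Finset (F × F)}
    (hP : NoLCollinear F (l + 3) P) : numCollinearTriples F P ≤ l * #P ^ 2 := by
  classical
  let third (e : (F × F) × (F × F)) : Finset (F × F) :=
    {c ∈ P | c ≠ e.1 ∧ c ≠ e.2 ∧ Collinear F {e.1, e.2, c}}
  have hthird : ∀ e ∈ P.offDiag,
      #((third e).image fun c => ({e.1, e.2, c} : Finset (F × F))) ≤ l := by
    rintro ⟨a, b⟩ he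
    obtain ⟨ha, hb, hab⟩ := mem_offDiag.1 he
    exact card_image_le.trans
      (hP.card_le_of_forall_collinear ha hb hab (filter_subset _ _) fun c hc => (mem_filter.1 hc).2)
  have hcover : collinearTriples F P ⊆
      P.offDiag.biUnion fun e => (third e).image fun c => {e.1, e.2, c} := by
    intro T hT
    obtain ⟨hTP, hT3, hcol⟩ := mem_collinearTriples.1 hT
    obtain ⟨a, b, c, hab, hac, hbc, rfl⟩ := card_eq_three.1 hT3
    simp only [insert_subset_iff, singleton_subset_iff] at hTP
    refine mem_biUnion.2 ⟨(a, b), mem_offDiag.2 ⟨hTP.1, hTP.2.1, hab⟩, mem_image.2 ⟨c, ?_, rfl⟩⟩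
    exact mem_filter.2 ⟨hTP.2.2, hac.symm, hbc.symm, by simpa using hcol⟩
  calc numCollinearTriples F P = #(collinearTriples F P) := (card_collinearTriples P).symm
    _ ≤ #P.offDiag * l := (card_le_card hcover).trans (card_biUnion_le_card_mul _ _ _ hthird)
    _ ≤ l * #P ^ 2 := by
      rw [mul_comm, offDiag_card, sq]
      gcongr
      exact Nat.sub_le _ _

lemma sub_mul_sub_eq_of_collinear {a b c : F × F} (h : Collinear F {a, b, c}) :
    (b.1 - a.1) * (c.2 - a.2) = (c.1 - a.1) * (b.2 - a.2) := by
  obtain ⟨v, hv⟩ := (collinear_iff_of_mem (p₀ := a) (by simp)).1 h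
  obtain ⟨r, rfl⟩ := hv b (by simp)
  obtain ⟨t, rfl⟩ := hv c (by simp)
  simp only [vadd_eq_add, Prod.fst_add, Prod.snd_add, Prod.smul_fst, Prod.smul_snd, smul_eq_mul]
  ring

lemma isArc_range_sq_add (s : F) : IsArc F (Set.range fun x : F => (x, x ^ 2 + s)) := by
  rintro _ ⟨x, rfl⟩ _ ⟨y, rfl⟩ _ ⟨z, rfl⟩ hxy hxz hyz hcol
  have hdet : (y - x) * ((z - x) * (z - y)) = 0 := by
    linear_combination sub_mul_sub_eq_of_collinear hcol
  rcases mul_eq_zero.1 hdet with h | h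
  · exact hxy (by rw [sub_eq_zero.1 h])
  rcases mul_eq_zero.1 h with h | h
  · exact hxz (by rw [sub_eq_zero.1 h])
  · exact hyz (by rw [sub_eq_zero.1 h])

variable [Fintype F]

/-- The parabola `y = x² + s` as a finite set of points of `F²`. -/
def parabola (s : F) : Finset (F × F) :=
  univ.map ⟨fun x => (x, x ^ 2 + s), fun _ _ h => congrArg Prod.fst h⟩

lemma card_parabola (s : F) : #(parabola s) = Fintype.card F := card_map _

lemma isArc_parabola (s : F) : IsArc F (parabola s : Set (F × F)) := by
  rw [parabola, coe_map, coe_univ, Set.image_univ]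
  exact isArc_range_sq_add s

lemma pairwise_disjoint_parabola : Pairwise (Function.onFun Disjoint (parabola (F := F))) := by
  intro s t hst
  refine disjoint_left.2 fun z hs ht => hst ?_
  obtain ⟨x, -, rfl⟩ := mem_map.1 hs
  obtain ⟨y, -, hy⟩ := mem_map.1 ht
  obtain ⟨rfl, h⟩ := Prod.mk.inj hy
  exact (add_left_cancel h).symm

lemma exists_noLCollinear_card_eq {m : ℕ} (hm : m ≤ Fintype.card F) :
    ∃ P : Finset (F × F), #P = m * Fintype.card F ∧ NoLCollinear F (2 * m + 1) P := by
  classical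
  obtain ⟨A, -, rfl⟩ := exists_subset_card_eq (s := (univ : Finset F)) (by simpa using hm)
  refine ⟨A.biUnion parabola, ?_, noLCollinear_biUnion fun s _ => isArc_parabola s⟩
  rw [card_biUnion (pairwise_disjoint_parabola.set_pairwise _), sum_congr rfl
    fun s _ => card_parabola s, sum_const, smul_eq_mul]

end Geometry

section TailBounds

variable {Ω ι : Type*} [MeasurableSpace Ω] {μ : Measure Ω}

lemma one_sub_ofReal_le_of_measureReal_compl_le [IsProbabilityMeasure μ] {E : Set Ω} {δ : ℝ}
    (hE : MeasurableSet E) (h : μ.real Eᶜ ≤ δ) : 1 - ENNReal.ofReal δ ≤ μ E := by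
  rw [← compl_compl E, prob_compl_eq_one_sub hE.compl, ← ofReal_measureReal]
  exact tsub_le_tsub_left (ENNReal.ofReal_le_ofReal h) 1

lemma memLp_indicator_one [IsFiniteMeasure μ] {E : Set Ω} (hE : MeasurableSet E) (r : ℝ≥0∞) :
    MemLp (E.indicator (1 : Ω → ℝ)) r μ :=
  memLp_indicator_const r hE 1 (Or.inr (measure_ne_top μ E))

lemma integral_sum_indicator_one [IsFiniteMeasure μ] {I : Finset ι} {E : ι → Set Ω}
    (hE : ∀ i ∈ I, MeasurableSet (E i)) :
    ∫ ω, ∑ i ∈ I, (E i).indicator 1 ω ∂μ = ∑ i ∈ I, μ.real (E i) := by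
  rw [integral_finsetSum _ fun i hi => (memLp_indicator_one (hE i hi) 1).integrable le_rfl]
  exact sum_congr rfl fun i hi => integral_indicator_one (hE i hi)

lemma measureReal_le_sum_indicator_le [IsFiniteMeasure μ] {I : Finset ι} {E : ι → Set Ω}
    (hE : ∀ i ∈ I, MeasurableSet (E i)) {t : ℝ} (ht : 0 < t) :
    μ.real {ω | t ≤ ∑ i ∈ I, (E i).indicator 1 ω} ≤ (∑ i ∈ I, μ.real (E i)) / t := by
  rw [le_div_iff₀' ht, ← integral_sum_indicator_one hE]
  refine mul_meas_ge_le_integral_of_nonneg (.of_forall fun ω => ?_) ?_ t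
  · exact sum_nonneg fun i _ => Set.indicator_nonneg (fun _ _ => zero_le_one) ω
  · exact integrable_finsetSum _ fun i hi => (memLp_indicator_one (hE i hi) 1).integrable le_rfl

lemma variance_indicator_one_le [IsProbabilityMeasure μ] {E : Set Ω} (hE : MeasurableSet E) :
    Var[E.indicator 1; μ] ≤ μ.real E := by
  have hsq : (E.indicator 1 : Ω → ℝ) ^ 2 = E.indicator 1 := by
    ext ω
    by_cases hω : ω ∈ E <;> simp [hω]
  refine (variance_le_expectation_sq (memLp_indicator_one hE 2).aestronglyMeasurable).trans_eq ?_
  rw [hsq, integral_indicator_one hE]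

lemma variance_sum_indicator_one_le [IsProbabilityMeasure μ] {I : Finset ι} {E : ι → Set Ω}
    (hE : ∀ i ∈ I, MeasurableSet (E i)) (hind : iIndepSet E μ) :
    Var[∑ i ∈ I, (E i).indicator 1; μ] ≤ ∑ i ∈ I, μ.real (E i) := by
  rw [IndepFun.variance_sum (fun i hi => memLp_indicator_one (hE i hi) 2)
    fun i _ j _ hij => hind.iIndepFun_indicator.indepFun hij]
  exact sum_le_sum fun i hi => variance_indicator_one_le (hE i hi)

lemma measureReal_sum_indicator_le_half_le [IsProbabilityMeasure μ] {I : Finset ι}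
    {E : ι → Set Ω} (hE : ∀ i ∈ I, MeasurableSet (E i)) (hind : iIndepSet E μ)
    (hpos : 0 < ∑ i ∈ I, μ.real (E i)) :
    μ.real {ω | ∑ i ∈ I, (E i).indicator 1 ω ≤ (∑ i ∈ I, μ.real (E i)) / 2} ≤
      4 / ∑ i ∈ I, μ.real (E i) := by
  set M := ∑ i ∈ I, μ.real (E i)
  set X : Ω → ℝ := ∑ i ∈ I, (E i).indicator 1
  have hX : MemLp X 2 μ := memLp_finsetSum' I fun i hi => memLp_indicator_one (hE i hi) 2
  have hmean : μ[X] = M := by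
    simpa only [X, Finset.sum_apply] using integral_sum_indicator_one hE
  have hsub : {ω | ∑ i ∈ I, (E i).indicator 1 ω ≤ M / 2} ⊆ {ω | M / 2 ≤ |X ω - μ[X]|} := by
    intro ω hω
    rw [Set.mem_ofPred_eq, ← Finset.sum_apply] at hω
    rw [Set.mem_ofPred_eq, hmean, abs_sub_comm]
    exact le_abs.2 (Or.inl (by linarith))
  have hcheb := (measure_mono hsub).trans (meas_ge_le_variance_div_sq hX (half_pos hpos))
  calc _ ≤ Var[X; μ] / (M / 2) ^ 2 :=
        ENNReal.toReal_le_of_le_ofReal (div_nonneg (variance_nonneg X μ) (sq_nonneg _)) hcheb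
    _ ≤ M / (M / 2) ^ 2 := by
        gcongr
        exact variance_sum_indicator_one_le hE hind
    _ = 4 / M := by field_simp; norm_num

end TailBounds

section RandomSubset

variable {F : Type*} [Field F] [Fintype F] {p : ℝ≥0} {hp : p ≤ 1}

instance isProbabilityMeasure_randomMeasure : IsProbabilityMeasure (randomMeasure F p hp) := by
  unfold randomMeasure
  infer_instance

lemma randomMeasure_subset_toSubset (T : Finset (F × F)) :
    randomMeasure F p hp {Q | T ⊆ toSubset Q} = (p : ℝ≥0∞) ^ #T := by
  classical
  have hbox : {Q : F × F → Bool | T ⊆ toSubset Q} =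
      Set.univ.pi fun x => if x ∈ T then {true} else Set.univ := by
    ext Q
    simp only [toSubset, subset_iff, mem_filter, mem_univ, true_and, Set.mem_ofPred_eq,
      Set.mem_pi, Set.mem_univ, true_implies]
    refine forall_congr' fun x => ?_
    by_cases hx : x ∈ T <;> simp [hx]
  have hprod : ∏ x : F × F, (if x ∈ T then (p : ℝ≥0∞) else 1) = (p : ℝ≥0∞) ^ #T := by
    rw [prod_ite_mem, univ_inter, prod_const]
  rw [hbox, randomMeasure, Measure.pi_pi, ← hprod]
  refine prod_congr rfl fun x _ => ?_
  split_ifs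
  · rw [PMF.toMeasure_apply_singleton _ _ (measurableSet_singleton _)]
    rfl
  · exact measure_univ

lemma measureReal_subset_toSubset (T : Finset (F × F)) :
    (randomMeasure F p hp).real {Q | T ⊆ toSubset Q} = (p : ℝ) ^ #T := by
  simp [measureReal_def, randomMeasure_subset_toSubset]

lemma measureReal_mem_toSubset (x : F × F) :
    (randomMeasure F p hp).real {Q | x ∈ toSubset Q} = p := by
  simpa using measureReal_subset_toSubset (hp := hp) {x}

lemma iIndepSet_mem_toSubset :
    iIndepSet (fun x : F × F => {Q | x ∈ toSubset Q}) (randomMeasure F p hp) := by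
  rw [iIndepSet_iff_meas_biInter fun _ => .of_discrete]
  intro T
  have hinter : ⋂ x ∈ T, {Q : F × F → Bool | x ∈ toSubset Q} = {Q | T ⊆ toSubset Q} := by
    ext Q
    simp [subset_iff]
  have hone : ∀ x : F × F, randomMeasure F p hp {Q | x ∈ toSubset Q} = p := fun x => by
    simpa using randomMeasure_subset_toSubset (hp := hp) {x}
  simp only [hinter, randomMeasure_subset_toSubset, hone, prod_const]

lemma measureReal_card_inter_toSubset_le_half_le [DecidableEq F] {P : Finset (F × F)}
    (hP : P.Nonempty) (hp0 : 0 < p) :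
    (randomMeasure F p hp).real {Q | (#(P ∩ toSubset Q) : ℝ) ≤ #P * p / 2} ≤ 4 / (#P * p) := by
  have hsum : ∑ x ∈ P, (randomMeasure F p hp).real {Q | x ∈ toSubset Q} = #P * p := by
    simp [measureReal_mem_toSubset]
  have hcount : ∀ Q : F × F → Bool,
      ∑ x ∈ P, {Q | x ∈ toSubset Q}.indicator (1 : (F × F → Bool) → ℝ) Q = #(P ∩ toSubset Q) := by
    simp [Set.indicator_apply, ← filter_mem_eq_inter]
  have hpos : 0 < #P * (p : ℝ) := mul_pos (mod_cast hP.card_pos) (mod_cast hp0)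
  have h := measureReal_sum_indicator_le_half_le (μ := randomMeasure F p hp) (I := P)
    (fun _ _ => .of_discrete) iIndepSet_mem_toSubset (hsum ▸ hpos)
  simpa only [hsum, hcount] using h

lemma measureReal_le_numCollinearTriples_inter_toSubset_le [DecidableEq F] (P : Finset (F × F))
    {t : ℝ} (ht : 0 < t) :
    (randomMeasure F p hp).real {Q | t ≤ numCollinearTriples F (P ∩ toSubset Q)} ≤
      numCollinearTriples F P * (p : ℝ) ^ 3 / t := by
  have hsum : ∑ T ∈ collinearTriples F P, (randomMeasure F p hp).real {Q | T ⊆ toSubset Q} =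
      numCollinearTriples F P * (p : ℝ) ^ 3 := by
    have hcube : ∀ T ∈ collinearTriples F P,
        (randomMeasure F p hp).real {Q | T ⊆ toSubset Q} = (p : ℝ) ^ 3 := fun T hT => by
      rw [measureReal_subset_toSubset, (mem_collinearTriples.1 hT).2.1]
    rw [sum_congr rfl hcube, sum_const, card_collinearTriples, nsmul_eq_mul]
  have hcount : ∀ Q : F × F → Bool,
      ∑ T ∈ collinearTriples F P,
          {Q | T ⊆ toSubset Q}.indicator (1 : (F × F → Bool) → ℝ) Q =
        numCollinearTriples F (P ∩ toSubset Q) := by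
    simp [Set.indicator_apply, ← card_collinearTriples, collinearTriples_inter]
  have h := measureReal_le_sum_indicator_le (μ := randomMeasure F p hp)
    (I := collinearTriples F P) (E := fun T => {Q | T ⊆ toSubset Q}) (fun _ _ => .of_discrete) ht
  simpa only [hsum, hcount] using h

lemma measureReal_maxArc_toSubset_lt_le {P : Finset (F × F)} (hP : P.Nonempty) (hp0 : 0 < p) :
    (randomMeasure F p hp).real {Q | (maxArc F (toSubset Q) : ℝ) < #P * p / 4} ≤
      4 / (#P * p) + 4 * numCollinearTriples F P * p ^ 2 / #P := by
  classical
  have hcard : (0 : ℝ) < #P := mod_cast hP.card_pos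
  have hp0' : (0 : ℝ) < p := mod_cast hp0
  have hsub : {Q : F × F → Bool | (maxArc F (toSubset Q) : ℝ) < #P * p / 4} ⊆
      {Q | (#(P ∩ toSubset Q) : ℝ) ≤ #P * p / 2} ∪
        {Q | #P * (p : ℝ) / 4 ≤ numCollinearTriples F (P ∩ toSubset Q)} := by
    intro Q hQ
    obtain ⟨s, hs, harc, hle⟩ := exists_isArc_card_le (P ∩ toSubset Q)
    have hmax : #s ≤ maxArc F (toSubset Q) := harc.card_le_maxArc (hs.trans inter_subset_right)
    have hdel : (#(P ∩ toSubset Q) : ℝ) ≤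
        maxArc F (toSubset Q) + numCollinearTriples F (P ∩ toSubset Q) := by
      exact_mod_cast hle.trans (by gcongr)
    by_contra! hcon
    simp only [Set.mem_union, Set.mem_ofPred_eq, not_or, not_le] at hQ hcon
    linarith
  calc _ ≤ _ := (measureReal_mono hsub).trans (measureReal_union_le _ _)
    _ ≤ 4 / (#P * p) + numCollinearTriples F P * (p : ℝ) ^ 3 / (#P * p / 4) :=
      add_le_add (measureReal_card_inter_toSubset_le_half_le hP hp0)
        (measureReal_le_numCollinearTriples_inter_toSubset_le P
          (div_pos (mul_pos hcard hp0') four_pos))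
    _ = _ := by field_simp

/-- Apply the previous bound to `n + 1` parabolas: the error `16 * n ^ 2 * q * p ^ 2` vanishes for
`n = 0` because a single parabola is an arc. -/
lemma measureReal_maxArc_toSubset_lt_le_of_lt_card {n : ℕ} (hn : n < Fintype.card F)
    (hp0 : 0 < p) :
    (randomMeasure F p hp).real
        {Q | (maxArc F (toSubset Q) : ℝ) < (n + 1) * Fintype.card F * p / 4} ≤
      4 / ((n + 1) * Fintype.card F * p) + 16 * n ^ 2 * Fintype.card F * p ^ 2 := by
  obtain ⟨P, hcard, hP⟩ := exists_noLCollinear_card_eq (Nat.succ_le_of_lt hn)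
  have hcard' : (#P : ℝ) = (n + 1) * Fintype.card F := by
    rw [hcard]
    push_cast
    rfl
  have hpos : 0 < #P := hcard ▸ Nat.mul_pos n.succ_pos Fintype.card_pos
  have htriples : (numCollinearTriples F P : ℝ) ≤ 2 * n * #P ^ 2 := by
    exact_mod_cast NoLCollinear.numCollinearTriples_le (l := 2 * n) hP
  have hnn : (n : ℝ) ≤ n ^ 2 := by exact_mod_cast Nat.le_self_pow two_ne_zero n
  rw [← hcard']
  refine (measureReal_maxArc_toSubset_lt_le (card_pos.1 hpos) hp0).trans ?_
  gcongr
  calc 4 * (numCollinearTriples F P : ℝ) * (p : ℝ) ^ 2 / #P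
      ≤ 4 * (2 * n * #P ^ 2) * (p : ℝ) ^ 2 / #P := by gcongr
    _ = 8 * n * #P * (p : ℝ) ^ 2 := by
        field_simp
        ring
    _ = 8 * (n ^ 2 + n) * Fintype.card F * (p : ℝ) ^ 2 := by
        rw [hcard']
        ring
    _ ≤ 8 * (n ^ 2 + n ^ 2) * Fintype.card F * (p : ℝ) ^ 2 := by gcongr
    _ = 16 * n ^ 2 * Fintype.card F * (p : ℝ) ^ 2 := by ring

lemma rpow_neg_three_halves {x : ℝ} (hx : 0 ≤ x) : x ^ (-(3 : ℝ) / 2) = (√x ^ 3)⁻¹ := by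
  rw [Real.sqrt_eq_rpow, ← Real.rpow_natCast, ← Real.rpow_mul hx, ← Real.rpow_neg hx]
  norm_num

theorem measureReal_maxArc_toSubset_lt_sqrt_le {ε : ℝ} (hε : 0 < ε) (hε1 : ε < 1)
    (hpq : (Fintype.card F : ℝ) ^ (-(3 : ℝ) / 2) ≤ p) :
    (randomMeasure F p hp).real
        {Q | (maxArc F (toSubset Q) : ℝ) < ε * √(Fintype.card F) / 4} ≤
      4 / (ε * √(Fintype.card F)) + 16 * ε ^ 2 := by
  have hq : (0 : ℝ) < Fintype.card F := mod_cast Fintype.card_pos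
  rw [rpow_neg_three_halves hq.le] at hpq
  set s := √(Fintype.card F : ℝ)
  have hs : 0 < s := Real.sqrt_pos.2 hq
  have hqs : (Fintype.card F : ℝ) = s ^ 2 := (Real.sq_sqrt hq.le).symm
  have hp0 : 0 < (p : ℝ) := (by positivity : 0 < (s ^ 3)⁻¹).trans_le hpq
  have hsp : 1 ≤ s ^ 3 * p := (inv_le_iff_one_le_mul₀' (by positivity)).1 hpq
  set n := ⌊ε / (s * p)⌋₊
  have hle : n * (s * p) ≤ ε := (le_div_iff₀ (by positivity)).1 (Nat.floor_le (by positivity))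
  have hlt : ε < (n + 1) * (s * p) := (div_lt_iff₀ (by positivity)).1 (Nat.lt_floor_add_one _)
  have hn : n < Fintype.card F := by
    have : (n : ℝ) < Fintype.card F := calc
      (n : ℝ) ≤ n * (s ^ 3 * p) := le_mul_of_one_le_right (by positivity) hsp
      _ = n * (s * p) * s ^ 2 := by ring
      _ ≤ ε * s ^ 2 := by gcongr
      _ < Fintype.card F := by rw [hqs]; exact mul_lt_of_lt_one_left (by positivity) hε1
    exact_mod_cast this
  have hmean : ε * s ≤ (n + 1) * Fintype.card F * p := by rw [hqs]; nlinarith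
  have hmono : {Q : F × F → Bool | (maxArc F (toSubset Q) : ℝ) < ε * s / 4} ⊆
      {Q | (maxArc F (toSubset Q) : ℝ) < (n + 1) * Fintype.card F * p / 4} := by
    intro Q hQ
    rw [Set.mem_ofPred_eq] at hQ ⊢
    linarith
  refine (measureReal_mono hmono).trans <|
    (measureReal_maxArc_toSubset_lt_le_of_lt_card hn (by exact_mod_cast hp0)).trans
      (add_le_add (by gcongr) ?_)
  calc 16 * n ^ 2 * Fintype.card F * (p : ℝ) ^ 2 = 16 * (n * (s * p)) ^ 2 := by
        rw [hqs]
        ring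
    _ ≤ 16 * ε ^ 2 := by gcongr

end RandomSubset

theorem random_arc_lower :
    ∀ δ : ℝ, 0 < δ → δ < 1 → ∃ c : ℝ, 0 < c ∧ ∃ q₀ : ℕ,
      ∀ (F : Type) [Field F] [Fintype F], q₀ ≤ Fintype.card F →
      ∀ (p : ℝ≥0) (hp : p ≤ 1),
      (Fintype.card F : ℝ) ^ (-(3 : ℝ) / 2) < (p : ℝ) → (p : ℝ) < 1 →
      1 - ENNReal.ofReal δ ≤
        randomMeasure F p hp
          {Q | c * Real.sqrt (Fintype.card F) ≤ (maxArc F (toSubset Q) : ℝ)} := by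
  intro δ hδ hδ1
  refine ⟨δ / 32, by positivity, ⌈(64 / δ ^ 2) ^ 2⌉₊, fun F _ _ hq p hp hpq _ => ?_⟩
  have hs : 64 / δ ^ 2 ≤ √(Fintype.card F : ℝ) := Real.le_sqrt_of_sq_le (Nat.ceil_le.1 hq)
  have hs0 : 0 < √(Fintype.card F : ℝ) := (by positivity : 0 < 64 / δ ^ 2).trans_le hs
  refine one_sub_ofReal_le_of_measureReal_compl_le .of_discrete ?_
  have hcompl : {Q | δ / 32 * √(Fintype.card F) ≤ (maxArc F (toSubset Q) : ℝ)}ᶜ =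
      {Q | (maxArc F (toSubset Q) : ℝ) < δ / 8 * √(Fintype.card F) / 4} := by
    ext Q
    rw [Set.mem_compl_iff, Set.mem_ofPred_eq, Set.mem_ofPred_eq, not_le]
    ring_nf
  have hcheb : 4 / (δ / 8 * √(Fintype.card F)) ≤ δ / 2 := by
    rw [div_le_iff₀ (by positivity)] at hs ⊢
    linarith
  calc _ ≤ 4 / (δ / 8 * √(Fintype.card F)) + 16 * (δ / 8) ^ 2 :=
        hcompl ▸ measureReal_maxArc_toSubset_lt_sqrt_le (by positivity) (by linarith) hpq.le
    _ ≤ δ / 2 + δ / 2 := by gcongr; nlinarith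
    _ = δ := add_halves δ
end

section
/- For every δ > 0 there exist constants c > 0 and q₀ such that for every prime power q ≥ q₀ there exists a set P ⊆ F² with |P| ≥ c · q^{2/3} such that P contains no four distinct collinear points and a(P) ≤ |P|^{3/4 + δ}. -/
/-!
Write `q = |F|`. The set `P` is obtained by the deletion method from a random set of
`n ≈ q^(2/3) / 2` points of `F²`. There are at most `q^6` collinear quadruples, so about `n⁴ / q²`
of them, at most `n / 4`, are expected in the random set; deleting a point from each one that occurs
costs at most half of the set. Every arc in `P` has fewer than `10 s` points, where
`s ≈ 3 √(q log q)`, because a union bound over all arcs with `10 s` points shows that the random set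
contains none of them, once these arcs are counted.

The count is a graph container argument. Fix `s` points `S` of an arc, and join two points of the
plane when the line through them meets `S`. The other points of the arc form an independent set in
this graph, and the graph is dense on every set `U` with more than `2 (q + 1)` points: the `q + 1`
lines through a point of `S` cut `U` into few classes, so by Cauchy–Schwarz at least
`|U|² / (2 (q + 1))` ordered pairs are collinear with it, and a pair is counted for at most two
points of `S` because `S` is an arc. Hence some vertex of `U` has at least `s |U| / (4 (q + 1))`
neighbours in `U`. By the Kleitman–Winston algorithm, after selecting `s` further points of the arc
only `2 (q + 1)` candidates are left for the remaining `8 s`. So there are at most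
`C(q², s)² C(2q + 2, 8s)` arcs with `10 s` points, far fewer than `(q² / n)^(10 s)`.
-/

open Finset MeasureTheory
open scoped NNReal ENNReal

section DeletionMethod

theorem choose_mul_pow_le_choose_mul_pow {n N : ℕ} (hn : n ≤ N) (k : ℕ) :
    n.choose k * N ^ k ≤ N.choose k * n ^ k := by
  induction k with
  | zero => simp
  | succ k ih =>
    have hstep : (n - k) * N ≤ (N - k) * n := by
      rw [Nat.sub_mul, Nat.sub_mul, mul_comm n N]
      exact Nat.sub_le_sub_left (Nat.mul_le_mul_left k hn) _
    refine Nat.le_of_mul_le_mul_right ?_ k.succ_pos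
    calc n.choose (k + 1) * N ^ (k + 1) * (k + 1)
        = (n.choose (k + 1) * (k + 1)) * N ^ (k + 1) := by ring
      _ = (n.choose k * N ^ k) * ((n - k) * N) := by rw [Nat.choose_succ_right_eq]; ring
      _ ≤ (N.choose k * n ^ k) * ((N - k) * n) := Nat.mul_le_mul ih hstep
      _ = (N.choose (k + 1) * (k + 1)) * n ^ (k + 1) := by rw [Nat.choose_succ_right_eq]; ring
      _ = N.choose (k + 1) * n ^ (k + 1) * (k + 1) := by ring

theorem choose_sub_mul_pow_le {k n N : ℕ} (hk : k ≤ n) (hn : n ≤ N) :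
    (N - k).choose (n - k) * N ^ k ≤ N.choose n * n ^ k := by
  refine Nat.le_of_mul_le_mul_left ?_ (Nat.choose_pos (hk.trans hn))
  calc N.choose k * ((N - k).choose (n - k) * N ^ k)
      = N.choose n * (n.choose k * N ^ k) := by rw [← mul_assoc, ← Nat.choose_mul hk, mul_assoc]
    _ ≤ N.choose n * (N.choose k * n ^ k) :=
      Nat.mul_le_mul_left _ (choose_mul_pow_le_choose_mul_pow hn k)
    _ = N.choose k * (N.choose n * n ^ k) := by ring

variable {V : Type*} {S : Finset V} {k l n : ℕ} {X Y : Finset (Finset V)}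

theorem card_powersetCard_filter_superset_mul_pow_le [DecidableEq V] (hn : n ≤ #S) {K : Finset V}
    (hK : K ⊆ S) :
    #{P ∈ powersetCard n S | K ⊆ P} * #S ^ #K ≤ (#S).choose n * n ^ #K := by
  rcases le_or_gt #K n with hKn | hKn
  · rw [card_filter_powersetCard_subset _ _ _ hK hKn]
    exact choose_sub_mul_pow_le hKn hn
  · have : #{P ∈ powersetCard n S | K ⊆ P} = 0 := by
      refine card_eq_zero.2 (filter_eq_empty_iff.2 fun P hP hKP => ?_)
      exact (card_le_card hKP).not_gt ((mem_powersetCard.1 hP).2 ▸ hKn)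
    simp [this]

theorem sum_card_filter_subset_mul_pow_le [DecidableEq V] (hn : n ≤ #S)
    (hX : X ⊆ powersetCard k S) :
    (∑ P ∈ powersetCard n S, #{K ∈ X | K ⊆ P}) * #S ^ k ≤ (#S).choose n * (#X * n ^ k) := by
  calc (∑ P ∈ powersetCard n S, #{K ∈ X | K ⊆ P}) * #S ^ k
      = ∑ K ∈ X, #{P ∈ powersetCard n S | K ⊆ P} * #S ^ k := by
        rw [← sum_mul]
        congr 1
        exact sum_card_bipartiteAbove_eq_sum_card_bipartiteBelow (fun P K : Finset V => K ⊆ P)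
    _ ≤ ∑ _K ∈ X, (#S).choose n * n ^ k := sum_le_sum fun K hK => by
        obtain ⟨hKS, rfl⟩ := mem_powersetCard.1 (hX hK)
        exact card_powersetCard_filter_superset_mul_pow_le hn hKS
    _ = (#S).choose n * (#X * n ^ k) := by rw [sum_const, smul_eq_mul]; ring

theorem exists_powersetCard_two_mul_card_filter_subset_le [DecidableEq V] (hn0 : 0 < n)
    (hn : n ≤ #S) (hX : X ⊆ powersetCard l S) (hY : Y ⊆ powersetCard k S)
    (hXcard : 4 * (#X * n ^ l) ≤ n * #S ^ l) (hYcard : 4 * (#Y * n ^ k) ≤ #S ^ k) :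
    ∃ P ∈ powersetCard n S, 2 * #{K ∈ X | K ⊆ P} ≤ n ∧ ∀ K ∈ Y, ¬ K ⊆ P := by
  have hS : 0 < #S := hn0.trans_le hn
  have hsumX : 4 * ∑ P ∈ powersetCard n S, #{K ∈ X | K ⊆ P} ≤ (#S).choose n * n := by
    refine Nat.le_of_mul_le_mul_right ?_ (pow_pos hS l)
    nlinarith [sum_card_filter_subset_mul_pow_le hn hX, Nat.mul_le_mul_left ((#S).choose n) hXcard]
  have hsumY : 4 * ∑ P ∈ powersetCard n S, #{K ∈ Y | K ⊆ P} ≤ (#S).choose n := by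
    refine Nat.le_of_mul_le_mul_right ?_ (pow_pos hS k)
    nlinarith [sum_card_filter_subset_mul_pow_le hn hY, Nat.mul_le_mul_left ((#S).choose n) hYcard]
  have hsum : ∑ P ∈ powersetCard n S, 2 * (#{K ∈ X | K ⊆ P} + n * #{K ∈ Y | K ⊆ P})
      ≤ ∑ _P ∈ powersetCard n S, n := by
    rw [← mul_sum, sum_add_distrib, ← mul_sum, sum_const, card_powersetCard, smul_eq_mul]
    nlinarith [Nat.mul_le_mul_left n hsumY]
  obtain ⟨P, hP, hPn⟩ := exists_le_of_sum_le (powersetCard_nonempty.2 hn) hsum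
  refine ⟨P, hP, by omega, fun K hK hKP => ?_⟩
  have hpos : 1 ≤ #{K ∈ Y | K ⊆ P} := card_pos.2 ⟨K, mem_filter.2 ⟨hK, hKP⟩⟩
  nlinarith

theorem exists_subset_forall_not_subset [DecidableEq V] (hX : ∅ ∉ X) (P : Finset V) :
    ∃ Q ⊆ P, #P ≤ #Q + #{K ∈ X | K ⊆ P} ∧ ∀ K ∈ X, ¬ K ⊆ Q := by
  have hne : ∀ K : {K // K ∈ {K ∈ X | K ⊆ P}}, K.1.Nonempty := fun K =>
    nonempty_iff_ne_empty.2 fun h => hX (h ▸ (mem_filter.1 K.2).1)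
  choose g hg using hne
  have hcard : #(univ.image g) ≤ #{K ∈ X | K ⊆ P} :=
    card_image_le.trans (by rw [card_univ, Fintype.card_coe])
  refine ⟨P \ univ.image g, sdiff_subset, ?_, fun K hK hKQ => ?_⟩
  · have := le_card_sdiff (univ.image g) P
    omega
  · have hKP : K ∈ {K ∈ X | K ⊆ P} := mem_filter.2 ⟨hK, hKQ.trans sdiff_subset⟩
    exact (mem_sdiff.1 (hKQ (hg ⟨K, hKP⟩))).2 (mem_image_of_mem g (mem_univ _))

theorem exists_subset_forall_not_subset_of_card_le (hn0 : 0 < n) (hn : n ≤ #S) (hl : l ≠ 0)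
    (hX : X ⊆ powersetCard l S) (hY : Y ⊆ powersetCard k S)
    (hXcard : 4 * (#X * n ^ l) ≤ n * #S ^ l) (hYcard : 4 * (#Y * n ^ k) ≤ #S ^ k) :
    ∃ Q ⊆ S, n ≤ 2 * #Q ∧ (∀ K ∈ X, ¬ K ⊆ Q) ∧ ∀ K ∈ Y, ¬ K ⊆ Q := by
  classical
  obtain ⟨P, hP, hPX, hPY⟩ :=
    exists_powersetCard_two_mul_card_filter_subset_le hn0 hn hX hY hXcard hYcard
  obtain ⟨hPS, rfl⟩ := mem_powersetCard.1 hP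
  have hempty : ∅ ∉ X := fun h => hl (mem_powersetCard.1 (hX h)).2.symm
  obtain ⟨Q, hQP, hcard, hQX⟩ := exists_subset_forall_not_subset hempty P
  exact ⟨Q, hQP.trans hPS, by omega, hQX, fun K hK hKQ => hPY K hK (hKQ.trans hQP)⟩

end DeletionMethod

section Containers

variable {V : Type*}

theorem choose_add_le_choose_mul_choose (n f m : ℕ) :
    n.choose (f + m) ≤ n.choose f * n.choose m := by
  calc n.choose (f + m) ≤ n.choose (f + m) * (f + m).choose f :=
        Nat.le_mul_of_pos_right _ (Nat.choose_pos (Nat.le_add_right f m))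
    _ = n.choose f * (n - f).choose m := by
        rw [Nat.choose_mul (Nat.le_add_right f m), Nat.add_sub_cancel_left]
    _ ≤ n.choose f * n.choose m :=
        Nat.mul_le_mul_left _ (Nat.choose_le_choose m (Nat.sub_le n f))

open Classical in
/-- The independent `k`-subsets of the graph induced by `G` on `U`. -/
noncomputable def indepSetsIn (G : SimpleGraph V) (U : Finset V) (k : ℕ) : Finset (Finset V) :=
  {I ∈ powersetCard k U | G.IsIndepSet I}

variable {G : SimpleGraph V} {U : Finset V} {k : ℕ}

theorem mem_indepSetsIn {I : Finset V} :
    I ∈ indepSetsIn G U k ↔ (I ⊆ U ∧ #I = k) ∧ G.IsIndepSet I := by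
  simp only [indepSetsIn, mem_filter, mem_powersetCard]

theorem card_indepSetsIn_le_choose : #(indepSetsIn G U k) ≤ (#U).choose k :=
  (card_le_card fun _ hI => mem_powersetCard.2 (mem_indepSetsIn.1 hI).1).trans
    (card_powersetCard k U).le

open Classical in
/-- The non-neighbours of `v` in `U`, without `v` itself. -/
noncomputable def nonNeighborsIn (G : SimpleGraph V) (U : Finset V) (v : V) : Finset V :=
  {w ∈ U | w ≠ v ∧ ¬ G.Adj v w}

theorem mem_nonNeighborsIn {v w : V} :
    w ∈ nonNeighborsIn G U v ↔ w ∈ U ∧ w ≠ v ∧ ¬ G.Adj v w := by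
  simp only [nonNeighborsIn, mem_filter]

theorem nonNeighborsIn_subset_erase [DecidableEq V] (v : V) :
    nonNeighborsIn G U v ⊆ U.erase v := fun _ hw =>
  have ⟨hwU, hwv, _⟩ := mem_nonNeighborsIn.1 hw
  mem_erase.2 ⟨hwv, hwU⟩

theorem card_indepSetsIn_succ_le [DecidableEq V] (v : V) :
    #(indepSetsIn G U (k + 1)) ≤
      #(indepSetsIn G (U.erase v) (k + 1)) + #(indepSetsIn G (nonNeighborsIn G U v) k) := by
  have hcover : indepSetsIn G U (k + 1) ⊆ indepSetsIn G (U.erase v) (k + 1) ∪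
      (indepSetsIn G (nonNeighborsIn G U v) k).image (insert v) := by
    intro I hI
    obtain ⟨⟨hIU, hIcard⟩, hind⟩ := mem_indepSetsIn.1 hI
    by_cases hv : v ∈ I
    · refine mem_union_right _ (mem_image.2 ⟨I.erase v, mem_indepSetsIn.2 ⟨⟨?_, ?_⟩, ?_⟩,
        insert_erase hv⟩)
      · intro w hw
        obtain ⟨hwv, hwI⟩ := mem_erase.1 hw
        exact mem_nonNeighborsIn.2 ⟨hIU hwI, hwv, hind hv hwI hwv.symm⟩
      · rw [card_erase_of_mem hv, hIcard, Nat.add_sub_cancel]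
      · exact hind.mono (coe_subset.2 (erase_subset v I))
    · exact mem_union_left _
        (mem_indepSetsIn.2 ⟨⟨subset_erase.2 ⟨hIU, hv⟩, hIcard⟩, hind⟩)
  exact (card_le_card hcover).trans
    ((card_union_le _ _).trans (Nat.add_le_add_left card_image_le _))

open Classical in
theorem exists_card_nonNeighborsIn_le {β : ℝ} (hU : U.Nonempty)
    (hβ : β * #U ^ 2 ≤ #(G.interedges U U)) :
    ∃ v ∈ U, (#(nonNeighborsIn G U v) : ℝ) ≤ Real.exp (-β) * #U := by
  have hcount : #(G.interedges U U) = ∑ v ∈ U, #{w ∈ U | G.Adj v w} := by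
    simp only [SimpleGraph.interedges_def, card_filter, sum_product]
  have havg : ∑ _v ∈ U, β * #U ≤ ∑ v ∈ U, (#{w ∈ U | G.Adj v w} : ℝ) := by
    rw [sum_const, nsmul_eq_mul]
    calc (#U : ℝ) * (β * #U) = β * #U ^ 2 := by ring
      _ ≤ #(G.interedges U U) := hβ
      _ = ∑ v ∈ U, (#{w ∈ U | G.Adj v w} : ℝ) := by rw [hcount, Nat.cast_sum]
  obtain ⟨v, hv, hdeg⟩ := exists_le_of_sum_le hU havg
  refine ⟨v, hv, ?_⟩
  have hsplit : #(nonNeighborsIn G U v) + #{w ∈ U | G.Adj v w} ≤ #U := by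
    rw [← card_filter_add_card_filter_not (s := U) (fun w => G.Adj v w), add_comm]
    refine Nat.add_le_add_left (card_le_card fun w hw => ?_) _
    have ⟨hwU, _, hvw⟩ := mem_nonNeighborsIn.1 hw
    exact mem_filter.2 ⟨hwU, hvw⟩
  calc (#(nonNeighborsIn G U v) : ℝ) ≤ #U - #{w ∈ U | G.Adj v w} :=
        le_sub_iff_add_le.2 (mod_cast hsplit)
    _ ≤ (-β + 1) * #U := by linarith
    _ ≤ Real.exp (-β) * #U := by gcongr; exact Real.add_one_le_exp _

open Classical in
theorem card_indepSetsIn_le_choose_mul_choose {β : ℝ} {R : ℕ} (f m : ℕ)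
    (hβ : ∀ W ⊆ U, R < #W → β * #W ^ 2 ≤ #(G.interedges W W))
    (hf : #U * Real.exp (-(β * f)) ≤ R) :
    #(indepSetsIn G U (f + m)) ≤ (#U).choose f * R.choose m := by
  -- An independent set avoids `v`, or consists of `v` and non-neighbours of `v`; with `v` of large
  -- degree the latter case uses up one of the `f` selections, and Pascal's rule adds the two cases.
  induction U using Finset.strongInduction generalizing f with
  | H U ih =>
  rcases le_or_gt #U R with hUR | hUR
  · exact card_indepSetsIn_le_choose.trans ((choose_add_le_choose_mul_choose _ f m).trans
      (Nat.mul_le_mul_left _ (Nat.choose_le_choose m hUR)))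
  cases f with
  | zero => exact absurd (show #U ≤ R by simpa using hf) hUR.not_ge
  | succ f =>
    obtain ⟨v, hv, hcard⟩ := exists_card_nonNeighborsIn_le (card_pos.1 (by omega))
      (hβ U Subset.rfl hUR)
    have hN := nonNeighborsIn_subset_erase (G := G) (U := U) v
    have herase := erase_ssubset hv
    have hNU := hN.trans_ssubset herase
    have havoid : #(indepSetsIn G (U.erase v) (f + 1 + m)) ≤
        (#(U.erase v)).choose (f + 1) * R.choose m :=
      ih _ herase (f + 1) (fun W hW => hβ W (hW.trans herase.subset))
        (le_trans (by gcongr) hf)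
    have hselect : #(indepSetsIn G (nonNeighborsIn G U v) (f + m)) ≤
        (#(U.erase v)).choose f * R.choose m := by
      refine (ih _ hNU f (fun W hW => hβ W (hW.trans hNU.subset)) ?_).trans
        (Nat.mul_le_mul_right _ (Nat.choose_le_choose f (card_le_card hN)))
      calc #(nonNeighborsIn G U v) * Real.exp (-(β * f))
          ≤ Real.exp (-β) * #U * Real.exp (-(β * f)) := by gcongr
        _ = #U * Real.exp (-(β * (f + 1 : ℕ))) := by
            rw [mul_comm (Real.exp _), mul_assoc, ← Real.exp_add]; push_cast; ring_nf
        _ ≤ R := hf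
    calc #(indepSetsIn G U (f + 1 + m))
        ≤ #(indepSetsIn G (U.erase v) (f + 1 + m)) +
            #(indepSetsIn G (nonNeighborsIn G U v) (f + m)) := by
          rw [add_right_comm f 1 m]; exact card_indepSetsIn_succ_le v
      _ ≤ ((#(U.erase v)).choose (f + 1) + (#(U.erase v)).choose f) * R.choose m := by
          rw [add_mul]; exact Nat.add_le_add havoid hselect
      _ = (#U).choose (f + 1) * R.choose m := by
          rw [← card_erase_add_one hv, Nat.choose_succ_succ', add_comm]

end Containers

section PairsInFibers

theorem sq_card_le_card_mul_card_pairs {α β : Type*} [Fintype β] [DecidableEq β] (f : α → β)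
    (U : Finset α) :
    #U ^ 2 ≤ Fintype.card β * #{e ∈ U ×ˢ U | f e.1 = f e.2} := by
  have hfiber : ∀ b, {e ∈ {e ∈ U ×ˢ U | f e.1 = f e.2} | f e.1 = b} =
      {x ∈ U | f x = b} ×ˢ {x ∈ U | f x = b} := by
    grind
  calc #U ^ 2 = (∑ b, #{x ∈ U | f x = b}) ^ 2 := by
        rw [← card_eq_sum_card_fiberwise fun x _ => mem_univ (f x)]
    _ ≤ Fintype.card β * ∑ b, #{x ∈ U | f x = b} ^ 2 := sq_sum_le_card_mul_sum_sq
    _ = Fintype.card β * #{e ∈ U ×ˢ U | f e.1 = f e.2} := by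
        rw [card_eq_sum_card_fiberwise (s := {e ∈ U ×ˢ U | f e.1 = f e.2}) (f := fun e => f e.1)
          fun e _ => mem_univ (f e.1)]
        simp only [hfiber, card_product, sq]

theorem sq_card_le_two_mul_card_mul_card_offDiag {α β : Type*} [Fintype β] [DecidableEq β]
    (f : α → β) {U : Finset α} (hU : 2 * Fintype.card β ≤ #U) :
    #U ^ 2 ≤ 2 * Fintype.card β * #{e ∈ U.offDiag | f e.1 = f e.2} := by
  classical
  have hpairs : #{e ∈ U ×ˢ U | f e.1 = f e.2} ≤ #{e ∈ U.offDiag | f e.1 = f e.2} + #U := by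
    calc #{e ∈ U ×ˢ U | f e.1 = f e.2} ≤ #({e ∈ U.offDiag | f e.1 = f e.2} ∪ U.diag) :=
          card_le_card fun e he => by grind
      _ ≤ #{e ∈ U.offDiag | f e.1 = f e.2} + #U := (card_union_le _ _).trans (by rw [diag_card])
  nlinarith [sq_card_le_card_mul_card_pairs f U, Nat.mul_le_mul_left (Fintype.card β) hpairs]

end PairsInFibers

section Collinearity

variable {F V : Type*} [Field F] [AddCommGroup V] [Module F V]

open Classical in
/-- The direction of the line through `p` and `x`, as a point at infinity; an arbitrary direction
if `x = p`. -/
noncomputable def lineDirection (F : Type*) {V : Type*} [Field F] [AddCommGroup V] [Module F V]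
    [Nontrivial V] (p x : V) : Projectivization F V :=
  if h : x - p = 0 then Classical.arbitrary _ else .mk F (x - p) h

theorem collinear_of_lineDirection_eq [Nontrivial V] {p x y : V}
    (h : lineDirection F p x = lineDirection F p y) : Collinear F {p, x, y} := by
  by_cases hx : x - p = 0
  · rw [sub_eq_zero.1 hx, Set.insert_eq_of_mem (Set.mem_insert p {y})]
    exact collinear_pair F p y
  by_cases hy : y - p = 0
  · rw [sub_eq_zero.1 hy, Set.pair_comm, Set.insert_eq_of_mem (Set.mem_insert p {x})]
    exact collinear_pair F p x
  rw [lineDirection, lineDirection, dif_neg hx, dif_neg hy,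
    Projectivization.mk_eq_mk_iff'] at h
  obtain ⟨a, ha⟩ := h
  refine (collinear_iff_of_mem (Set.mem_insert p _)).2 ⟨y - p, ?_⟩
  rintro z (rfl | rfl | rfl)
  · exact ⟨0, by simp⟩
  · exact ⟨a, by simp [ha]⟩
  · exact ⟨1, by simp⟩

open Classical in
/-- The collinear `k`-element subsets of a finite affine space. -/
noncomputable def collinearSets (F V : Type*) [Field F] [AddCommGroup V] [Module F V] [Fintype V]
    (k : ℕ) : Finset (Finset V) :=
  {A ∈ powersetCard k univ | Collinear F (A : Set V)}

theorem mem_collinearSets [Fintype V] {k : ℕ} {A : Finset V} :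
    A ∈ collinearSets F V k ↔ #A = k ∧ Collinear F (A : Set V) := by
  simp only [collinearSets, mem_filter, mem_powersetCard_univ]

theorem exists_eq_insert_insert_image_lineMap [Fintype F] [DecidableEq V] {A : Finset V} {k : ℕ}
    (hA : Collinear F (A : Set V)) (hcard : #A = k + 2) :
    ∃ a b, ∃ T ∈ powersetCard k (univ : Finset F),
      insert a (insert b (T.image (AffineMap.lineMap (k := F) a b))) = A := by
  classical
  obtain ⟨a, ha, b, hb, hab⟩ := one_lt_card.1 (by omega : 1 < #A)
  have hbA : b ∈ A.erase a := mem_erase.2 ⟨hab.symm, hb⟩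
  set C := (A.erase a).erase b with hC
  have hCcard : #C = k := by
    rw [hC, card_erase_of_mem hbA, card_erase_of_mem ha, hcard]; omega
  have hCline : (C : Set V) ⊆ Set.range (AffineMap.lineMap (k := F) a b) := fun x hx =>
    mem_affineSpan_pair_iff_exists_lineMap_eq.1 (hA.mem_affineSpan_of_mem_of_ne ha hb
      (mem_of_mem_erase (mem_of_mem_erase (mem_coe.1 hx))) hab)
  obtain ⟨T, -, hT⟩ := subset_set_image_iff.1 (hCline.trans Set.image_univ.superset)
  have hTcard : #T = k := by
    rw [← hCcard, ← hT, card_image_of_injective T (AffineMap.lineMap_injective F hab)]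
  refine ⟨a, b, T, mem_powersetCard_univ.2 hTcard, ?_⟩
  rw [hT, insert_erase hbA, insert_erase ha]

theorem card_collinearSets_le [Fintype F] [Fintype V] (k : ℕ) :
    #(collinearSets F V (k + 2)) ≤ Fintype.card V ^ 2 * (Fintype.card F).choose k := by
  classical
  have hcover : collinearSets F V (k + 2) ⊆
      ((univ : Finset (V × V)) ×ˢ powersetCard k (univ : Finset F)).image
        fun ((a, b), T) => insert a (insert b (T.image (AffineMap.lineMap (k := F) a b))) := by
    intro A hA
    obtain ⟨hAcard, hcol⟩ := mem_collinearSets.1 hA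
    obtain ⟨a, b, T, hT, rfl⟩ := exists_eq_insert_insert_image_lineMap hcol hAcard
    exact mem_image.2 ⟨((a, b), T), mem_product.2 ⟨mem_univ _, hT⟩, rfl⟩
  calc #(collinearSets F V (k + 2))
      ≤ #((univ : Finset (V × V)) ×ˢ powersetCard k (univ : Finset F)) :=
        (card_le_card hcover).trans card_image_le
    _ = Fintype.card V ^ 2 * (Fintype.card F).choose k := by
        rw [card_product, card_powersetCard, card_univ, card_univ, Fintype.card_prod, sq]

theorem noLCollinear_of_forall_mem_collinearSets [Fintype F] {k : ℕ} {P : Finset (F × F)}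
    (hP : ∀ A ∈ collinearSets F (F × F) k, ¬ A ⊆ P) : NoLCollinear F k P :=
  fun A hAP hAcard hA => hP A (mem_collinearSets.2 ⟨hAcard, hA⟩) hAP

end Collinearity

section Arcs

variable {F : Type*} [Field F] {S P : Finset (F × F)} {k : ℕ}

theorem IsArc.subset {A B : Set (F × F)} (hA : IsArc F A) (hBA : B ⊆ A) : IsArc F B :=
  fun a ha b hb c hc => hA a (hBA ha) b (hBA hb) c (hBA hc)

theorem isArc_empty : IsArc F ∅ :=
  fun _ ha => absurd ha (Set.notMem_empty _)

theorem exists_isArc_card_eq_maxArc (P : Finset (F × F)) :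
    ∃ A ⊆ P, #A = maxArc F P ∧ IsArc F A :=
  Nat.sSup_mem (s := {k | ∃ A ⊆ P, #A = k ∧ IsArc F A})
    ⟨0, ∅, empty_subset P, card_empty, by simpa using isArc_empty⟩
    ⟨#P, by rintro _ ⟨A, hAP, rfl, -⟩; exact card_le_card hAP⟩

open Classical in
theorem card_filter_collinear_le_two (hS : IsArc F S) {x y : F × F} (hxy : x ≠ y) :
    #{p ∈ S | Collinear F {p, x, y}} ≤ 2 := by
  by_contra! hcard
  obtain ⟨a, b, c, ha, hb, hc, hab, hac, hbc⟩ := two_lt_card_iff.1 hcard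
  have hline : ∀ p ∈ ({p ∈ S | Collinear F {p, x, y}} : Finset (F × F)), p ∈ line[F, x, y] :=
    fun p hp => (mem_filter.1 hp).2.mem_affineSpan_of_mem_of_ne (by simp) (by simp) (by simp) hxy
  exact hS a (mem_filter.1 ha).1 b (mem_filter.1 hb).1 c (mem_filter.1 hc).1 hab hac hbc
    (collinear_triple_of_mem_affineSpan_pair (hline a ha) (hline b hb) (hline c hc))

/-- Two points are joined when the line through them meets `S`, so that the points which extend an
arc `S` to a larger arc form an independent set. -/
def secantGraph (S : Finset (F × F)) : SimpleGraph (F × F) where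
  Adj x y := x ≠ y ∧ ∃ p ∈ S, Collinear F {p, x, y}
  symm := ⟨fun x y ⟨hxy, p, hp, hcol⟩ => ⟨hxy.symm, p, hp, by rwa [Set.pair_comm y x]⟩⟩
  loopless := ⟨fun _ h => h.1 rfl⟩

theorem isIndepSet_secantGraph_sdiff [DecidableEq (F × F)] {A : Finset (F × F)} (hA : IsArc F A)
    (hSA : S ⊆ A) : (secantGraph S).IsIndepSet ↑(A \ S) := by
  rintro x hx y hy hxy ⟨-, p, hp, hcol⟩
  obtain ⟨hxA, hxS⟩ := mem_sdiff.1 (mem_coe.1 hx)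
  obtain ⟨hyA, hyS⟩ := mem_sdiff.1 (mem_coe.1 hy)
  exact hA p (hSA hp) x hxA y hyA (ne_of_mem_of_not_mem hp hxS) (ne_of_mem_of_not_mem hp hyS) hxy
    hcol

variable [Fintype F]

open Classical in
theorem sq_card_le_mul_card_filter_collinear (p : F × F) {U : Finset (F × F)}
    (hU : 2 * (Fintype.card F + 1) ≤ #U) :
    #U ^ 2 ≤ 2 * (Fintype.card F + 1) * #{e ∈ U.offDiag | Collinear F {p, e.1, e.2}} := by
  have := Fintype.ofFinite (Projectivization F (F × F))
  have hdir : Fintype.card (Projectivization F (F × F)) = Fintype.card F + 1 := by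
    rw [← Nat.card_eq_fintype_card, ← Nat.card_eq_fintype_card]
    exact Projectivization.card_of_finrank_two F (F × F) (by simp)
  rw [← hdir] at hU ⊢
  refine (sq_card_le_two_mul_card_mul_card_offDiag (lineDirection F p) hU).trans
    (Nat.mul_le_mul_left _ (card_le_card ?_))
  exact monotone_filter_right _ fun e _ he => collinear_of_lineDirection_eq he

open Classical in
theorem card_mul_sq_card_le_mul_card_interedges (hS : IsArc F S) {U : Finset (F × F)}
    (hU : 2 * (Fintype.card F + 1) ≤ #U) :
    #S * #U ^ 2 ≤ 4 * (Fintype.card F + 1) * #((secantGraph S).interedges U U) := by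
  have hdouble : ∑ p ∈ S, #{e ∈ U.offDiag | Collinear F {p, e.1, e.2}} ≤
      2 * #((secantGraph S).interedges U U) := by
    calc ∑ p ∈ S, #{e ∈ U.offDiag | Collinear F {p, e.1, e.2}}
        ≤ ∑ p ∈ S, #{e ∈ (secantGraph S).interedges U U | Collinear F {p, e.1, e.2}} := by
          refine sum_le_sum fun p hp => card_le_card fun e he => ?_
          obtain ⟨⟨h₁, h₂, hne⟩, hcol⟩ := (mem_filter.trans (and_congr_left' mem_offDiag)).1 he
          exact mem_filter.2 ⟨Rel.mk_mem_interedges_iff.2 ⟨h₁, h₂, hne, p, hp, hcol⟩, hcol⟩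
      _ = ∑ e ∈ (secantGraph S).interedges U U, #{p ∈ S | Collinear F {p, e.1, e.2}} :=
          sum_card_bipartiteAbove_eq_sum_card_bipartiteBelow
            (fun (p : F × F) (e : (F × F) × F × F) => Collinear F {p, e.1, e.2})
      _ ≤ #((secantGraph S).interedges U U) • 2 := sum_le_card_nsmul _ _ _ fun e he =>
          card_filter_collinear_le_two hS ((SimpleGraph.mem_interedges_iff _).1 he).2.2.ne
      _ = 2 * #((secantGraph S).interedges U U) := mul_comm _ _
  calc #S * #U ^ 2 = ∑ _p ∈ S, #U ^ 2 := by rw [sum_const, smul_eq_mul]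
    _ ≤ ∑ p ∈ S, 2 * (Fintype.card F + 1) * #{e ∈ U.offDiag | Collinear F {p, e.1, e.2}} :=
      sum_le_sum fun p _ => sq_card_le_mul_card_filter_collinear p hU
    _ ≤ 2 * (Fintype.card F + 1) * (2 * #((secantGraph S).interedges U U)) := by
      rw [← mul_sum]; exact Nat.mul_le_mul_left _ hdouble
    _ = 4 * (Fintype.card F + 1) * #((secantGraph S).interedges U U) := by ring

open Classical in
/-- The arcs in `F²` with `k` points. -/
noncomputable def arcs (F : Type*) [Field F] [Fintype F] (k : ℕ) : Finset (Finset (F × F)) :=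
  {A ∈ powersetCard k univ | IsArc F A}

theorem mem_arcs {A : Finset (F × F)} : A ∈ arcs F k ↔ #A = k ∧ IsArc F A := by
  simp only [arcs, mem_filter, mem_powersetCard_univ]

theorem maxArc_lt_of_forall_mem_arcs (hP : ∀ A ∈ arcs F k, ¬ A ⊆ P) : maxArc F P < k := by
  by_contra! hk
  obtain ⟨A, hAP, hAcard, hA⟩ := exists_isArc_card_eq_maxArc P
  obtain ⟨B, hBA, hBcard⟩ := exists_subset_card_eq (hAcard ▸ hk)
  exact hP B (mem_arcs.2 ⟨hBcard, hA.subset (coe_subset.2 hBA)⟩) (hBA.trans hAP)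

end Arcs

section Asymptotics

theorem isLittleO_sqrt_mul_log_rpow {ε : ℝ} (hε : 0 < ε) :
    (fun x : ℝ => √(x * Real.log x)) =o[Filter.atTop] fun x => x ^ (1 / 2 + ε) := by
  have h := (Asymptotics.isBigO_refl (fun x : ℝ => x ^ (1 / 2 : ℝ)) Filter.atTop).mul_isLittleO
    (isLittleO_log_rpow_rpow_atTop (1 / 2) hε)
  refine h.congr' ?_ ?_
  · filter_upwards [Filter.eventually_ge_atTop 1] with x hx
    rw [Real.sqrt_eq_rpow, Real.mul_rpow (by linarith) (Real.log_nonneg hx)]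
  · filter_upwards [Filter.eventually_gt_atTop 0] with x hx
    rw [Real.rpow_add hx]

theorem eventually_mul_sqrt_mul_log_le_rpow {C c δ : ℝ} (hC : 0 < C) (hc : 0 < c) (hδ : 0 < δ) :
    ∀ᶠ x : ℝ in Filter.atTop,
      C * √(x * Real.log x) ≤ (c * x ^ ((2 : ℝ) / 3)) ^ ((3 : ℝ) / 4 + δ) := by
  have hbound := (isLittleO_sqrt_mul_log_rpow (by positivity : 0 < 2 / 3 * δ)).bound
    (by positivity : 0 < c ^ ((3 : ℝ) / 4 + δ) / C)
  filter_upwards [hbound, Filter.eventually_gt_atTop 0] with x hx hx0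
  rw [Real.norm_of_nonneg (by positivity), Real.norm_of_nonneg (by positivity),
    div_mul_eq_mul_div, le_div_iff₀' hC] at hx
  calc C * √(x * Real.log x) ≤ c ^ ((3 : ℝ) / 4 + δ) * x ^ (1 / 2 + 2 / 3 * δ) := hx
    _ = (c * x ^ ((2 : ℝ) / 3)) ^ ((3 : ℝ) / 4 + δ) := by
      rw [Real.mul_rpow hc.le (by positivity), ← Real.rpow_mul hx0.le]
      ring_nf

theorem exists_four_mul_cube_le_sq_rpow_le {q : ℕ} (hq : 3 ≤ q) :
    ∃ n : ℕ, 0 < n ∧ 4 * n ^ 3 ≤ q ^ 2 ∧ (q : ℝ) ^ ((2 : ℝ) / 3) ≤ 4 * n := by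
  have hqR : (3 : ℝ) ≤ q := mod_cast hq
  set y : ℝ := (q : ℝ) ^ ((2 : ℝ) / 3) with hy
  have hy_cube : y ^ 3 = (q : ℝ) ^ 2 := by
    rw [hy, ← Real.rpow_natCast, ← Real.rpow_mul q.cast_nonneg, ← Real.rpow_natCast]
    norm_num
  have hy2 : 2 ≤ y := by
    refine le_of_pow_le_pow_left₀ three_ne_zero (by positivity) ?_
    rw [hy_cube]
    nlinarith
  refine ⟨⌊y / 2⌋₊, Nat.floor_pos.2 (by linarith), ?_, ?_⟩
  · have : (4 : ℝ) * ⌊y / 2⌋₊ ^ 3 ≤ q ^ 2 := by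
      calc (4 : ℝ) * ⌊y / 2⌋₊ ^ 3 ≤ 4 * (y / 2) ^ 3 := by
            gcongr; exact Nat.floor_le (by positivity)
        _ ≤ y ^ 3 := by linarith [show 0 ≤ y ^ 3 by positivity]
        _ = q ^ 2 := hy_cube
    exact_mod_cast this
  · linarith [Nat.div_two_lt_floor (by linarith : 1 ≤ y / 2)]

theorem exists_four_mul_add_one_mul_log_le_sq {q : ℕ} (hq : 3 ≤ q) :
    ∃ s : ℕ, 4 * (q + 1) * Real.log q ≤ s ^ 2 ∧ s ≤ 6 * √(q * Real.log q) := by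
  have hqR : (3 : ℝ) ≤ q := mod_cast hq
  have hlog : 1 ≤ Real.log q := by
    rw [Real.le_log_iff_exp_le (by linarith)]
    linarith [Real.exp_one_lt_three]
  set z := √(q * Real.log q) with hz
  have hz1 : 1 ≤ z := Real.one_le_sqrt.2 (by nlinarith)
  refine ⟨⌈3 * z⌉₊, ?_, ?_⟩
  · calc 4 * (q + 1) * Real.log q ≤ 9 * (q * Real.log q) := by nlinarith
      _ = (3 * z) ^ 2 := by rw [mul_pow, hz, Real.sq_sqrt (by positivity)]; norm_num
      _ ≤ ⌈3 * z⌉₊ ^ 2 := by gcongr; exact Nat.le_ceil _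
  · linarith [Nat.ceil_lt_two_mul (by linarith : 2⁻¹ < 3 * z)]

end Asymptotics

section CountingArcs

variable {F : Type*} [Field F] [Fintype F]

theorem card_arcs_add_le (s f m : ℕ)
    (hf : (Fintype.card F ^ 2 : ℕ) * Real.exp (-(s / (4 * (Fintype.card F + 1) : ℕ) * f)) ≤
      (2 * (Fintype.card F + 1) : ℕ)) :
    #(arcs F (s + (f + m))) ≤ (Fintype.card F ^ 2).choose s *
      ((Fintype.card F ^ 2).choose f * (2 * (Fintype.card F + 1)).choose m) := by
  classical
  have hplane : #(univ : Finset (F × F)) = Fintype.card F ^ 2 := by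
    rw [card_univ, Fintype.card_prod, sq]
  have hcover : arcs F (s + (f + m)) ⊆ (arcs F s).biUnion fun S =>
      (indepSetsIn (secantGraph S) univ (f + m)).image (S ∪ ·) := by
    intro A hA
    obtain ⟨hAcard, hArc⟩ := mem_arcs.1 hA
    obtain ⟨S, hSA, hScard⟩ := exists_subset_card_eq (s := A) (n := s) (by omega)
    refine mem_biUnion.2 ⟨S, mem_arcs.2 ⟨hScard, hArc.subset (coe_subset.2 hSA)⟩,
      mem_image.2 ⟨A \ S, mem_indepSetsIn.2 ⟨⟨subset_univ _, ?_⟩,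
        isIndepSet_secantGraph_sdiff hArc hSA⟩, union_sdiff_of_subset hSA⟩⟩
    rw [card_sdiff_of_subset hSA]
    omega
  refine (card_le_card hcover).trans ((card_biUnion_le_card_mul _ _ _ fun S hS => ?_).trans
    (Nat.mul_le_mul_right _ ?_))
  · obtain ⟨rfl, hArc⟩ := mem_arcs.1 hS
    rw [← hplane] at hf ⊢
    refine card_image_le.trans (card_indepSetsIn_le_choose_mul_choose f m (fun W _ hW => ?_) hf)
    rw [div_mul_eq_mul_div, div_le_iff₀' (by positivity)]
    exact_mod_cast card_mul_sq_card_le_mul_card_interedges hArc hW.le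
  · rw [← hplane, ← card_powersetCard]
    exact card_le_card fun A hA => mem_powersetCard_univ.2 (mem_arcs.1 hA).1

theorem card_arcs_ten_mul_le {s : ℕ}
    (hs : 4 * (Fintype.card F + 1) * Real.log (Fintype.card F) ≤ s ^ 2) :
    #(arcs F (10 * s)) ≤ (Fintype.card F ^ 4 * (4 * Fintype.card F) ^ 8) ^ s := by
  set q := Fintype.card F
  have hq : 0 < q := Fintype.card_pos
  have hexp : (q ^ 2 : ℕ) * Real.exp (-(s / (4 * (q + 1) : ℕ) * s)) ≤ (2 * (q + 1) : ℕ) := by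
    have hlog : Real.log q ≤ s / (4 * (q + 1) : ℕ) * s := by
      rw [div_mul_eq_mul_div, le_div_iff₀' (by positivity)]
      push_cast
      linarith
    calc (q ^ 2 : ℕ) * Real.exp (-(s / (4 * (q + 1) : ℕ) * s))
        ≤ (q ^ 2 : ℕ) * Real.exp (-Real.log q) := by gcongr
      _ = q := by
        rw [Real.exp_neg, Real.exp_log (by positivity)]
        push_cast
        field_simp
      _ ≤ (2 * (q + 1) : ℕ) := by exact_mod_cast (by omega : q ≤ 2 * (q + 1))
  calc #(arcs F (10 * s)) = #(arcs F (s + (s + 8 * s))) := by congr 2; ring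
    _ ≤ (q ^ 2).choose s * ((q ^ 2).choose s * (2 * (q + 1)).choose (8 * s)) :=
      card_arcs_add_le s s (8 * s) hexp
    _ ≤ (q ^ 2) ^ s * ((q ^ 2) ^ s * (4 * q) ^ (8 * s)) := by
      gcongr
      · exact Nat.choose_le_pow _ _
      · exact Nat.choose_le_pow _ _
      · exact (Nat.choose_le_pow _ _).trans (Nat.pow_le_pow_left (by omega) _)
    _ = (q ^ 4 * (4 * q) ^ 8) ^ s := by rw [pow_mul, ← mul_pow, ← mul_pow]; ring

theorem four_mul_card_arcs_mul_pow_le {n s : ℕ} (hq : 2 ^ 18 ≤ Fintype.card F)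
    (hn : n ^ 3 ≤ Fintype.card F ^ 2)
    (hs : 4 * (Fintype.card F + 1) * Real.log (Fintype.card F) ≤ s ^ 2) :
    4 * (#(arcs F (10 * s)) * n ^ (10 * s)) ≤ (Fintype.card F ^ 2) ^ (10 * s) := by
  have harcs := card_arcs_ten_mul_le hs
  set q := Fintype.card F
  have hs0 : s ≠ 0 := by
    rintro rfl
    have hlog : 0 < Real.log q := Real.log_pos (by exact_mod_cast (by omega : 1 < q))
    exact hs.not_gt (by rw [Nat.cast_zero, zero_pow two_ne_zero]; positivity)
  have hnq : n ≤ q :=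
    le_of_pow_le_pow_left₀ three_ne_zero q.zero_le
      (hn.trans (Nat.pow_le_pow_right (by omega) (by norm_num)))
  have hn9 : n ^ 9 ≤ q ^ 6 := by
    calc n ^ 9 = (n ^ 3) ^ 3 := by ring
      _ ≤ (q ^ 2) ^ 3 := Nat.pow_le_pow_left hn 3
      _ = q ^ 6 := by ring
  calc 4 * (#(arcs F (10 * s)) * n ^ (10 * s))
      ≤ 4 ^ s * ((q ^ 4 * (4 * q) ^ 8) ^ s * (n ^ 10) ^ s) := by
        rw [pow_mul]
        gcongr
        exact Nat.le_self_pow hs0 4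
    _ = (2 ^ 18 * q ^ 12 * (n ^ 9 * n)) ^ s := by
        rw [← mul_pow, ← mul_pow]
        ring
    _ ≤ (q * q ^ 12 * (q ^ 6 * q)) ^ s := by gcongr
    _ = (q ^ 2) ^ (10 * s) := by rw [pow_mul]; ring

theorem exists_noLCollinear_four_maxArc_lt {n s : ℕ} (hn0 : 0 < n)
    (hn : 4 * n ^ 3 ≤ Fintype.card F ^ 2) (hq : 2 ^ 18 ≤ Fintype.card F)
    (hs : 4 * (Fintype.card F + 1) * Real.log (Fintype.card F) ≤ s ^ 2) :
    ∃ P : Finset (F × F), n ≤ 2 * #P ∧ NoLCollinear F 4 P ∧ maxArc F P < 10 * s := by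
  classical
  have hquads := (card_collinearSets_le (F := F) (V := F × F) 2).trans
    (Nat.mul_le_mul_left _ (Nat.choose_le_pow _ 2))
  have harcs := four_mul_card_arcs_mul_pow_le hq (by omega : n ^ 3 ≤ Fintype.card F ^ 2) hs
  have hplane : #(univ : Finset (F × F)) = Fintype.card F ^ 2 := by
    rw [card_univ, Fintype.card_prod, sq]
  rw [← card_univ, hplane] at hquads
  set q := Fintype.card F
  have hquadsMean : 4 * (#(collinearSets F (F × F) 4) * n ^ 4) ≤ n * (q ^ 2) ^ 4 := by
    calc 4 * (#(collinearSets F (F × F) 4) * n ^ 4) ≤ 4 * ((q ^ 2) ^ 2 * q ^ 2 * n ^ 4) := by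
          gcongr
      _ = n * (q ^ 2) ^ 3 * (4 * n ^ 3) := by ring
      _ ≤ n * (q ^ 2) ^ 3 * q ^ 2 := Nat.mul_le_mul_left _ hn
      _ = n * (q ^ 2) ^ 4 := by ring
  have hnplane : n ≤ q ^ 2 := (Nat.le_self_pow three_ne_zero n).trans (by omega)
  rw [← hplane] at hquadsMean harcs hnplane
  obtain ⟨P, -, hPcard, hPquads, hParcs⟩ :=
    exists_subset_forall_not_subset_of_card_le hn0 hnplane four_ne_zero
      (fun A hA => mem_powersetCard_univ.2 (mem_collinearSets.1 hA).1)
      (fun A hA => mem_powersetCard_univ.2 (mem_arcs.1 hA).1) hquadsMean harcs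
  exact ⟨P, hPcard, noLCollinear_of_forall_mem_collinearSets hPquads,
    maxArc_lt_of_forall_mem_arcs hParcs⟩

theorem exists_noLCollinear_four_maxArc_le_sqrt (hq : 2 ^ 18 ≤ Fintype.card F) :
    ∃ P : Finset (F × F), 1 / 8 * (Fintype.card F : ℝ) ^ ((2 : ℝ) / 3) ≤ #P ∧
      NoLCollinear F 4 P ∧
      maxArc F P ≤ 60 * √(Fintype.card F * Real.log (Fintype.card F)) := by
  obtain ⟨n, hn0, hn, hn_ge⟩ := exists_four_mul_cube_le_sq_rpow_le (le_trans (by norm_num) hq)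
  obtain ⟨s, hs, hs_le⟩ := exists_four_mul_add_one_mul_log_le_sq (le_trans (by norm_num) hq)
  obtain ⟨P, hPcard, hPcol, hParc⟩ := exists_noLCollinear_four_maxArc_lt hn0 hn hq hs
  have hPcardR : (n : ℝ) ≤ 2 * #P := mod_cast hPcard
  have hParcR : (maxArc F P : ℝ) < 10 * s := mod_cast hParc
  exact ⟨P, by linarith, hPcol, by linarith⟩

end CountingArcs

theorem balogh_solymosi_analogue :
    ∀ δ : ℝ, 0 < δ → ∃ c : ℝ, 0 < c ∧ ∃ q₀ : ℕ,
      ∀ (F : Type) [Field F] [Fintype F], q₀ ≤ Fintype.card F →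
      ∃ P : Finset (F × F),
        c * (Fintype.card F : ℝ) ^ ((2 : ℝ) / 3) ≤ (P.card : ℝ) ∧
        NoLCollinear F 4 P ∧
        (maxArc F P : ℝ) ≤ (P.card : ℝ) ^ ((3 : ℝ) / 4 + δ) := by
  intro δ hδ
  obtain ⟨q₁, hq₁⟩ := Filter.eventually_atTop.1 (tendsto_natCast_atTop_atTop.eventually
    (eventually_mul_sqrt_mul_log_le_rpow (C := 60) (c := 1 / 8) (by norm_num) (by norm_num) hδ))
  refine ⟨1 / 8, by norm_num, max q₁ (2 ^ 18), fun F _ _ hF => ?_⟩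
  obtain ⟨P, hPcard, hPcol, hParc⟩ :=
    exists_noLCollinear_four_maxArc_le_sqrt (F := F) (le_of_max_le_right hF)
  refine ⟨P, hPcard, hPcol, ?_⟩
  calc (maxArc F P : ℝ) ≤ 60 * √(Fintype.card F * Real.log (Fintype.card F)) := hParc
    _ ≤ (1 / 8 * (Fintype.card F : ℝ) ^ ((2 : ℝ) / 3)) ^ ((3 : ℝ) / 4 + δ) :=
      hq₁ _ (le_of_max_le_left hF)
    _ ≤ (P.card : ℝ) ^ ((3 : ℝ) / 4 + δ) := by gcongr
end

section
/- For every integer l ≥ 4 and every δ > 0 there exist constants c, C > 0 and q₀ such that for every prime power q ≥ q₀ there exists a set P ⊆ F² with |P| ≥ c · q^{2 − l/(l−1)} satisfying: (i) P contains no l distinct collinear points; (ii) a(P) ≤ |P|^{((l−1)/(l−2))·(1/2 + δ)}; (iii) T(P) ≤ C · |P|^{(2l−5)/(l−2)}. -/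
/-!
Choose a random set `Q` of points with density about `q ^ (-l / (l - 1))`, and delete one point
from each collinear `l`-set and from each arc of size `k ≈ q ^ (1/2 + δ/2)` that `Q` contains.
What remains has about `q ^ ((l - 2) / (l - 1))` points, since a plane has at most `q ^ (j + 2)`
collinear `j`-sets and only `q ^ ((1 + o(1)) k)` arcs of size `k`. A single expectation, that of
the number of remaining points minus a weighted number of collinear triples, bounds both
quantities at once, so no concentration inequality is needed.

Arcs are counted by graph containers. Fix a set `S` of `m` points of the arc, where `m` is
slightly larger than `q ^ (1/2)`, and join two points of the plane when they are collinear with a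
point of `S`. The rest of the arc is independent in this graph and avoids all secants of `S`. Off
the secants, a line through two points meets `S` at most once, so degrees add up over `S`; by
Cauchy–Schwarz for the projections from the points of `S`, every set `U` of more than `2 (q + 1)`
such points spans a vertex of degree at least `m |U| / (2 (q + 1))`. The Kleitman–Winston
algorithm then confines the rest of the arc to one of at most `(q ^ 2 + 1) ^ m` sets of size about
`2 q`.
-/

open Finset MeasureTheory
open scoped NNReal ENNReal

section Containers

variable {V : Type*} {G : SimpleGraph V}

/-- The independent sets of `G` inside `U` are covered by a family of at most `N` containers, each
with at most `r` vertices. -/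
def HasContainers (G : SimpleGraph V) (U : Finset V) (r N : ℕ) : Prop :=
  ∃ 𝒞 : Finset (Finset V), #𝒞 ≤ N ∧ (∀ C ∈ 𝒞, #C ≤ r) ∧
    ∀ I ⊆ U, G.IsIndepSet I → ∃ C ∈ 𝒞, I ⊆ C

namespace HasContainers

variable {U : Finset V} {r N N₁ N₂ : ℕ}

theorem mono_right (h : HasContainers G U r N₁) (hN : N₁ ≤ N₂) : HasContainers G U r N₂ := by
  obtain ⟨𝒞, hcard, hrest⟩ := h
  exact ⟨𝒞, hcard.trans hN, hrest⟩

theorem of_card_le (hU : #U ≤ r) : HasContainers G U r 1 :=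
  ⟨{U}, by simp, by simpa using hU, fun I hI _ => ⟨U, by simp, hI⟩⟩

variable [DecidableRel G.Adj]

theorem branch [DecidableEq V] {v : V} (hout : HasContainers G (U.erase v) (r + 1) N₁)
    (hin : HasContainers G {w ∈ U.erase v | ¬ G.Adj v w} r N₂) :
    HasContainers G U (r + 1) (N₁ + N₂) := by
  obtain ⟨𝒞₁, hcard₁, hsize₁, hcover₁⟩ := hout
  obtain ⟨𝒞₂, hcard₂, hsize₂, hcover₂⟩ := hin
  refine ⟨𝒞₁ ∪ 𝒞₂.image (insert v), ?_, ?_, fun I hI hind => ?_⟩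
  · exact (card_union_le _ _).trans (add_le_add hcard₁ (card_image_le.trans hcard₂))
  · intro C hC
    obtain hC | hC := mem_union.mp hC
    · exact hsize₁ C hC
    · obtain ⟨D, hD, rfl⟩ := mem_image.mp hC
      exact (card_insert_le v D).trans (Nat.succ_le_succ (hsize₂ D hD))
  by_cases hvI : v ∈ I
  · have hsub : I.erase v ⊆ {w ∈ U.erase v | ¬ G.Adj v w} := fun w hw =>
      mem_filter.mpr ⟨erase_subset_erase v hI hw,
        hind hvI (mem_of_mem_erase hw) (ne_of_mem_erase hw).symm⟩
    obtain ⟨C, hC, hIC⟩ := hcover₂ _ hsub (hind.mono (coe_subset.mpr (erase_subset v I)))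
    exact ⟨insert v C, mem_union_right _ (mem_image_of_mem _ hC), subset_insert_iff.mpr hIC⟩
  · obtain ⟨C, hC, hIC⟩ := hcover₁ I (subset_erase.mpr ⟨hI, hvI⟩) hind
    exact ⟨C, mem_union_left _ hC, hIC⟩

/-- The Kleitman–Winston algorithm: deciding whether a vertex of large degree belongs to the
independent set either removes that vertex from `U`, or records it and shrinks `U` by a factor
`1 - β`, which happens at most `t` times. -/
theorem of_large_degree {β : ℝ} (hβ : β ≤ 1) {t : ℕ}
    (hdeg : ∀ W ⊆ U, r < #W → ∃ v ∈ W, β * #W ≤ #{w ∈ W | G.Adj v w})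
    (ht : #U * (1 - β) ^ t ≤ r) : HasContainers G U (r + t) ((#U + 1) ^ t) := by
  classical
  induction U using Finset.strongInduction generalizing t with | H U ih => ?_
  obtain hUr | hUr := le_or_gt #U r
  · exact (of_card_le (by omega)).mono_right (Nat.one_le_pow _ _ (by omega))
  obtain _ | t := t
  · exact absurd (by simpa using ht) hUr.not_ge
  obtain ⟨v, hv, hvdeg⟩ := hdeg U subset_rfl hUr
  have herase : U.erase v ⊂ U := erase_ssubset hv
  have hnonadj : {w ∈ U.erase v | ¬ G.Adj v w} ⊂ U := (filter_subset _ _).trans_ssubset herase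
  have : 0 ≤ 1 - β := sub_nonneg.mpr hβ
  have hshrink : (#{w ∈ U.erase v | ¬ G.Adj v w} : ℝ) ≤ #U * (1 - β) := by
    have hle : #{w ∈ U.erase v | ¬ G.Adj v w} ≤ #{w ∈ U | ¬ G.Adj v w} := by
      gcongr
    have hsplit := card_filter_add_card_filter_not (s := U) (G.Adj v)
    rify at hle hsplit
    linarith
  have hout : HasContainers G (U.erase v) (r + t + 1) ((#(U.erase v) + 1) ^ (t + 1)) :=
    ih _ herase (fun W hW => hdeg W (hW.trans herase.subset))
      (ht.trans' (by gcongr))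
  have hin : HasContainers G {w ∈ U.erase v | ¬ G.Adj v w} (r + t)
      ((#{w ∈ U.erase v | ¬ G.Adj v w} + 1) ^ t) := by
    refine ih _ hnonadj (fun W hW => hdeg W (hW.trans hnonadj.subset)) ?_
    calc (#{w ∈ U.erase v | ¬ G.Adj v w} : ℝ) * (1 - β) ^ t
        ≤ #U * (1 - β) * (1 - β) ^ t := by gcongr
      _ = #U * (1 - β) ^ (t + 1) := by ring
      _ ≤ r := ht
  refine (branch hout hin).mono_right ?_
  have hcard : #(U.erase v) + 1 ≤ #U := card_lt_card herase
  have hcard' : #{w ∈ U.erase v | ¬ G.Adj v w} + 1 ≤ #U := card_lt_card hnonadj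
  calc (#(U.erase v) + 1) ^ (t + 1) + (#{w ∈ U.erase v | ¬ G.Adj v w} + 1) ^ t
      ≤ #U ^ (t + 1) + #U ^ t := by gcongr
    _ = #U ^ t * (#U + 1) := by ring
    _ ≤ (#U + 1) ^ t * (#U + 1) := by gcongr; omega
    _ = (#U + 1) ^ (t + 1) := (pow_succ _ _).symm

end HasContainers

end Containers

section Collinearity

open scoped LinearAlgebra.Projectivization

variable {F V P : Type*} [Field F] [AddCommGroup V] [Module F V] [AddTorsor V P]

variable (F) in
/-- The graph joining two points of an affine space when they are collinear with a point of `S`. -/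
def collinearityGraph (S : Set P) : SimpleGraph P where
  Adj v w := v ≠ w ∧ ∃ s ∈ S, Collinear F {s, v, w}
  symm := ⟨fun v w ⟨hvw, s, hs, hcol⟩ => ⟨hvw.symm, s, hs, by rwa [Set.pair_comm w v]⟩⟩
  loopless := ⟨fun _ h => h.1 rfl⟩

variable (F) in
/-- The points outside `S` that lie on no line through two points of `S`. -/
def offSecants (S : Set P) : Set P :=
  {x | x ∉ S ∧ S.Pairwise fun s s' => ¬ Collinear F {x, s, s'}}

theorem collinear_of_span_vsub_eq {s x y : P}
    (h : Submodule.span F {x -ᵥ s} = Submodule.span F {y -ᵥ s}) :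
    Collinear F {s, x, y} := by
  obtain ⟨c, hc⟩ : ∃ c : F, c • (x -ᵥ s) = y -ᵥ s :=
    Submodule.mem_span_singleton.mp (h ▸ Submodule.mem_span_singleton_self _)
  rw [collinear_iff_of_mem (p₀ := s) (by simp)]
  refine ⟨x -ᵥ s, ?_⟩
  rintro p (rfl | rfl | rfl)
  · exact ⟨0, by simp⟩
  · exact ⟨1, by simp⟩
  · exact ⟨c, by simp [hc]⟩

theorem collinear_triple_of_pair {s s' v w : P} (hvw : v ≠ w) (h : Collinear F {s, v, w})
    (h' : Collinear F {s', v, w}) : Collinear F {v, s, s'} := by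
  have hs : s ∈ line[F, v, w] := h.mem_affineSpan_of_mem_of_ne (by simp) (by simp) (by simp) hvw
  have hs' : s' ∈ line[F, v, w] :=
    h'.mem_affineSpan_of_mem_of_ne (by simp) (by simp) (by simp) hvw
  exact collinear_triple_of_mem_affineSpan_pair (left_mem_affineSpan_pair F v w) hs hs'

open Classical in
/-- Cauchy–Schwarz for the sizes of the fibres of `f`. -/
theorem sq_card_le_card_mul_sum_card_fiber {α γ : Type*} {f : α → γ} {U : Finset α} {T : Finset γ}
    (hf : Set.MapsTo f U T) : #U ^ 2 ≤ #T * ∑ v ∈ U, #{w ∈ U | f w = f v} := by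
  have hsum : ∑ v ∈ U, #{w ∈ U | f w = f v} = ∑ g ∈ T, #{w ∈ U | f w = g} ^ 2 := by
    rw [← sum_fiberwise_of_maps_to hf]
    refine sum_congr rfl fun g _ => ?_
    rw [sum_congr rfl fun v hv => by rw [(mem_filter.mp hv).2], sum_const, smul_eq_mul, sq]
  rw [hsum, card_eq_sum_card_fiberwise hf]
  exact sq_sum_le_card_mul_sum_sq

open Classical in
/-- Apply Cauchy–Schwarz to the projection of `U` from `s` to the directions `ℙ F V`. -/
theorem sq_card_le_card_directions_mul [Finite V] {s : P} {U : Finset P} (hs : s ∉ U) :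
    #U ^ 2 ≤ Nat.card (ℙ F V) * (∑ v ∈ U, #{w ∈ U | v ≠ w ∧ Collinear F {s, v, w}} + #U) := by
  have := Fintype.ofFinite (ℙ F V)
  have hmaps : Set.MapsTo (fun x => Submodule.span F {x -ᵥ s}) U
      (univ.image (Projectivization.submodule : ℙ F V → Submodule F V)) := by
    intro x hx
    have hxs : x -ᵥ s ≠ 0 := vsub_ne_zero.mpr (ne_of_mem_of_not_mem hx hs)
    exact mem_image.mpr ⟨.mk F _ hxs, mem_univ _, Projectivization.submodule_mk _ hxs⟩
  have hfiber : ∀ v ∈ U, #{w ∈ U | Submodule.span F {w -ᵥ s} = Submodule.span F {v -ᵥ s}} ≤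
      #{w ∈ U | v ≠ w ∧ Collinear F {s, v, w}} + 1 := by
    intro v _
    refine (card_le_card (t := insert v _) fun w hw => ?_).trans (card_insert_le v _)
    obtain ⟨hwU, hspan⟩ := mem_filter.mp hw
    obtain rfl | hvw := eq_or_ne v w
    · exact mem_insert_self _ _
    · exact mem_insert_of_mem
        (mem_filter.mpr ⟨hwU, hvw, collinear_of_span_vsub_eq hspan.symm⟩)
  refine (sq_card_le_card_mul_sum_card_fiber hmaps).trans (Nat.mul_le_mul ?_ ?_)
  · exact card_image_le.trans (by simp)
  · exact (sum_le_sum hfiber).trans (by simp [sum_add_distrib])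

open Classical in
theorem sum_card_collinear_eq_card_adj {S : Finset P} (U : Finset P) {v : P}
    (hv : v ∈ offSecants F (S : Set P)) :
    ∑ s ∈ S, #{w ∈ U | v ≠ w ∧ Collinear F {s, v, w}} =
      #{w ∈ U | (collinearityGraph F (S : Set P)).Adj v w} := by
  rw [← card_biUnion]
  · congr 1
    ext w
    simp only [mem_biUnion, mem_filter, collinearityGraph, mem_coe]
    tauto
  · intro s hs s' hs' hss'
    refine disjoint_left.mpr fun w hw hw' => ?_
    obtain ⟨-, hvw, hcol⟩ := mem_filter.mp hw
    obtain ⟨-, -, hcol'⟩ := mem_filter.mp hw'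
    exact hv.2 hs hs' hss' (collinear_triple_of_pair hvw hcol hcol')

open Classical in
theorem exists_large_degree_collinearityGraph [Finite V] {S U : Finset P}
    (hU : (U : Set P) ⊆ offSecants F S) (hcard : 2 * Nat.card (ℙ F V) < #U) :
    ∃ v ∈ U, #S * #U ≤
      2 * Nat.card (ℙ F V) * #{w ∈ U | (collinearityGraph F (S : Set P)).Adj v w} := by
  set N := Nat.card (ℙ F V)
  set D := ∑ v ∈ U, #{w ∈ U | (collinearityGraph F (S : Set P)).Adj v w} with hD
  have hdouble : #S * #U ^ 2 ≤ N * (D + #S * #U) :=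
    calc #S * #U ^ 2 = ∑ _s ∈ S, #U ^ 2 := by simp
      _ ≤ ∑ s ∈ S, N * (∑ v ∈ U, #{w ∈ U | v ≠ w ∧ Collinear F {s, v, w}} + #U) :=
        sum_le_sum fun s hs => sq_card_le_card_directions_mul fun hsU => (hU hsU).1 hs
      _ = N * (∑ v ∈ U, ∑ s ∈ S, #{w ∈ U | v ≠ w ∧ Collinear F {s, v, w}} + #S * #U) := by
        rw [← mul_sum, sum_add_distrib, sum_comm, sum_const, smul_eq_mul]
      _ = N * (D + #S * #U) := by
        rw [hD, sum_congr rfl fun v hv => sum_card_collinear_eq_card_adj U (hU hv)]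
  have hne : U.Nonempty := card_pos.mp (by omega)
  refine exists_le_of_sum_le hne ?_
  rw [sum_const, smul_eq_mul, ← mul_sum]
  have hdiag : 2 * N * (#S * #U) ≤ #U * (#S * #U) := by gcongr
  rw [← hD]
  linarith

open Classical in
theorem hasContainers_collinearityGraph [Finite V] {S U : Finset P} {t : ℕ}
    (hS : #S ≤ 2 * Nat.card (ℙ F V)) (hU : (U : Set P) ⊆ offSecants F S)
    (ht : (#U : ℝ) * (1 - #S / (2 * Nat.card (ℙ F V))) ^ t ≤ 2 * Nat.card (ℙ F V)) :
    HasContainers (collinearityGraph F (S : Set P)) U (2 * Nat.card (ℙ F V) + t)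
      ((#U + 1) ^ t) := by
  refine HasContainers.of_large_degree (β := #S / (2 * Nat.card (ℙ F V))) ?_ ?_ (by simpa using ht)
  · exact div_le_one_of_le₀ (by exact_mod_cast hS) (by positivity)
  · intro W hW hcard
    obtain ⟨v, hv, hdeg⟩ :=
      exists_large_degree_collinearityGraph (fun x hx => hU (hW hx)) hcard
    refine ⟨v, hv, ?_⟩
    rw [div_mul_eq_mul_div]
    exact div_le_of_le_mul₀ (by positivity) (by positivity)
      (by rw [mul_comm (#{w ∈ W | _} : ℝ)]; exact_mod_cast hdeg)

open Classical in
/-- A collinear set consists of two of its points and further points of the line through them. -/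
theorem card_collinear_le [Fintype F] [Fintype P] (j : ℕ) :
    #{A : Finset P | #A = j + 2 ∧ Collinear F (A : Set P)} ≤
      Fintype.card P ^ 2 * Fintype.card F ^ j := by
  let line : P × P → Finset P := fun x => univ.image (AffineMap.lineMap x.1 x.2 : F → P)
  let extend : P × P → Finset P → Finset P := fun x B => insert x.1 (insert x.2 B)
  have hsub : ({A | #A = j + 2 ∧ Collinear F (A : Set P)} : Finset (Finset P)) ⊆
      univ.biUnion fun x => (powersetCard j (line x)).image (extend x) := by
    intro A hA
    obtain ⟨-, hcard, hcol⟩ := mem_filter.mp hA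
    obtain ⟨a, ha, b, hb, hab⟩ := one_lt_card.mp (by omega : 1 < #A)
    have hb' : b ∈ A.erase a := mem_erase.mpr ⟨hab.symm, hb⟩
    refine mem_biUnion.mpr ⟨(a, b), mem_univ _, mem_image.mpr
      ⟨(A.erase a).erase b, mem_powersetCard.mpr ⟨fun x hx => ?_, ?_⟩, ?_⟩⟩
    · have hxA : x ∈ A := mem_of_mem_erase (mem_of_mem_erase hx)
      obtain ⟨r, hr⟩ := mem_affineSpan_pair_iff_exists_lineMap_eq.mp
        (hcol.mem_affineSpan_of_mem_of_ne ha hb hxA hab)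
      exact mem_image.mpr ⟨r, mem_univ _, hr⟩
    · rw [card_erase_of_mem hb', card_erase_of_mem ha]
      omega
    · simp only [extend, insert_erase hb', insert_erase ha]
  have hline : ∀ x, #((powersetCard j (line x)).image (extend x)) ≤ Fintype.card F ^ j := fun x =>
    calc #((powersetCard j (line x)).image (extend x)) ≤ (#(line x)).choose j :=
          card_image_le.trans (card_powersetCard _ _).le
      _ ≤ #(line x) ^ j := Nat.choose_le_pow _ _
      _ ≤ Fintype.card F ^ j := by gcongr; exact card_image_le
  calc #{A : Finset P | #A = j + 2 ∧ Collinear F (A : Set P)}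
      ≤ #(univ : Finset (P × P)) * Fintype.card F ^ j :=
        (card_le_card hsub).trans (card_biUnion_le_card_mul _ _ _ fun x _ => hline x)
    _ = Fintype.card P ^ 2 * Fintype.card F ^ j := by simp [sq]

end Collinearity

section ArcCount

open scoped LinearAlgebra.Projectivization

variable {F : Type*} [Field F]

theorem IsArc.sdiff_subset_offSecants {A S : Set (F × F)} (hA : IsArc F A) (hS : S ⊆ A) :
    A \ S ⊆ offSecants F S := by
  refine fun x hx => ⟨hx.2, fun s hs s' hs' hss' => ?_⟩
  exact hA x hx.1 s (hS hs) s' (hS hs') (ne_of_mem_of_not_mem hs hx.2).symm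
    (ne_of_mem_of_not_mem hs' hx.2).symm hss'

theorem IsArc.isIndepSet_sdiff {A S : Set (F × F)} (hA : IsArc F A) (hS : S ⊆ A) :
    (collinearityGraph F S).IsIndepSet (A \ S) := by
  rintro v hv w hw hvw ⟨-, s, hs, hcol⟩
  exact hA s (hS hs) v hv.1 w hw.1 (ne_of_mem_of_not_mem hs hv.2) (ne_of_mem_of_not_mem hs hw.2)
    hvw hcol

variable [Fintype F]

theorem card_directions_plane : Nat.card (ℙ F (F × F)) = Fintype.card F + 1 := by
  rw [Projectivization.card_of_finrank_two F (F × F) (by simp), Nat.card_eq_fintype_card]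

open Classical in
theorem numArcs_eq_card (k : ℕ) :
    numArcs F k = #{A : Finset (F × F) | #A = k ∧ IsArc F (A : Set (F × F))} := by
  rw [numArcs, Nat.card_eq_fintype_card, Fintype.card_subtype]

theorem exists_containers_arcs_superset {S : Finset (F × F)} {t : ℕ}
    (hS : #S ≤ 2 * (Fintype.card F + 1))
    (ht : (Fintype.card F : ℝ) ^ 2 * (1 - #S / (2 * (Fintype.card F + 1))) ^ t ≤
      2 * (Fintype.card F + 1)) :
    ∃ 𝒞 : Finset (Finset (F × F)), #𝒞 ≤ (Fintype.card F ^ 2 + 1) ^ t ∧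
      (∀ C ∈ 𝒞, #C ≤ #S + (2 * (Fintype.card F + 1) + t)) ∧
      ∀ A : Finset (F × F), S ⊆ A → IsArc F (A : Set (F × F)) → ∃ C ∈ 𝒞, A ⊆ C := by
  classical
  set U : Finset (F × F) := {x | x ∈ offSecants F (S : Set (F × F))}
  have hU : #U ≤ Fintype.card F ^ 2 := (card_le_univ U).trans (by simp [sq])
  have hratio : (#S : ℝ) / (2 * (Fintype.card F + 1)) ≤ 1 :=
    div_le_one_of_le₀ (by exact_mod_cast hS) (by positivity)
  obtain ⟨𝒞, hcard, hsize, hcover⟩ : HasContainers (collinearityGraph F (S : Set (F × F))) U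
      (2 * (Fintype.card F + 1) + t) ((#U + 1) ^ t) := by
    rw [← card_directions_plane] at hS ⊢
    refine hasContainers_collinearityGraph hS (fun x hx => (mem_filter.mp hx).2) ?_
    rw [card_directions_plane]
    push_cast
    refine ht.trans' ?_
    gcongr
    exact_mod_cast hU
  refine ⟨𝒞.image (S ∪ ·), card_image_le.trans (hcard.trans (by gcongr)), ?_, ?_⟩
  · simp only [mem_image, forall_exists_index, and_imp, forall_apply_eq_imp_iff₂]
    exact fun C hC => (card_union_le S C).trans (by gcongr; exact hsize C hC)
  · intro A hSA hA
    obtain ⟨C, hC, hAC⟩ := hcover (A \ S)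
      (fun x hx => mem_filter.mpr ⟨mem_univ x, hA.sdiff_subset_offSecants (coe_subset.mpr hSA)
        (by simpa using hx)⟩)
      (by simpa using hA.isIndepSet_sdiff (coe_subset.mpr hSA))
    exact ⟨S ∪ C, mem_image_of_mem _ hC, sdiff_le_iff.mp hAC⟩

open Classical in
theorem card_arcs_superset_le (k : ℕ) {S : Finset (F × F)} {t : ℕ}
    (hS : #S ≤ 2 * (Fintype.card F + 1))
    (ht : (Fintype.card F : ℝ) ^ 2 * (1 - #S / (2 * (Fintype.card F + 1))) ^ t ≤
      2 * (Fintype.card F + 1)) :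
    #{A : Finset (F × F) | S ⊆ A ∧ #A = k ∧ IsArc F (A : Set (F × F))} ≤
      (Fintype.card F ^ 2 + 1) ^ t * (#S + (2 * (Fintype.card F + 1) + t)) ^ k := by
  obtain ⟨𝒞, hcard, hsize, hcover⟩ := exists_containers_arcs_superset hS ht
  have hsub : ({A | S ⊆ A ∧ #A = k ∧ IsArc F (A : Set (F × F))} : Finset (Finset (F × F))) ⊆
      𝒞.biUnion (powersetCard k) := by
    intro A hA
    obtain ⟨-, hSA, hAk, hA⟩ := mem_filter.mp hA
    obtain ⟨C, hC, hAC⟩ := hcover A hSA hA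
    exact mem_biUnion.mpr ⟨C, hC, mem_powersetCard.mpr ⟨hAC, hAk⟩⟩
  refine (card_le_card hsub).trans ((card_biUnion_le_card_mul _ _ _ fun C hC => ?_).trans
    (Nat.mul_le_mul_right _ hcard))
  rw [card_powersetCard]
  exact (Nat.choose_le_pow _ _).trans (Nat.pow_le_pow_left (hsize C hC) k)

theorem numArcs_le {m k t : ℕ} (hmk : m ≤ k) (hm : m ≤ 2 * (Fintype.card F + 1))
    (ht : (Fintype.card F : ℝ) ^ 2 * (1 - m / (2 * (Fintype.card F + 1))) ^ t ≤
      2 * (Fintype.card F + 1)) :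
    numArcs F k ≤ (Fintype.card F ^ 2) ^ m * ((Fintype.card F ^ 2 + 1) ^ t *
      (m + (2 * (Fintype.card F + 1) + t)) ^ k) := by
  classical
  have hsub : ({A | #A = k ∧ IsArc F (A : Set (F × F))} : Finset (Finset (F × F))) ⊆
      (powersetCard m univ).biUnion fun S =>
        {A | S ⊆ A ∧ #A = k ∧ IsArc F (A : Set (F × F))} := by
    intro A hA
    obtain ⟨-, hAk, hA⟩ := mem_filter.mp hA
    obtain ⟨S, hSA, hS⟩ := exists_subset_card_eq (hmk.trans_eq hAk.symm)
    exact mem_biUnion.mpr ⟨S, mem_powersetCard.mpr ⟨subset_univ S, hS⟩,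
      mem_filter.mpr ⟨mem_univ A, hSA, hAk, hA⟩⟩
  rw [numArcs_eq_card]
  refine (card_le_card hsub).trans ((card_biUnion_le_card_mul _ _ _ fun S hS => ?_).trans
    (Nat.mul_le_mul_right _ ?_))
  · obtain ⟨-, rfl⟩ := mem_powersetCard.mp hS
    exact card_arcs_superset_le k hm ht
  · rw [card_powersetCard, card_univ, Fintype.card_prod, ← sq]
    exact Nat.choose_le_pow _ _

end ArcCount

section ArcAsymptotics

open Filter

variable {F : Type*} [Field F] [Fintype F]

theorem one_sub_pow_le_inv {x β : ℝ} {t : ℕ} (hx : 0 < x) (hβ : β ≤ 1)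
    (hlog : Real.log x ≤ β * t) : (1 - β) ^ t ≤ x⁻¹ :=
  calc (1 - β) ^ t ≤ Real.exp (-β) ^ t := by
        have : 0 ≤ 1 - β := sub_nonneg.mpr hβ
        gcongr
        exact Real.one_sub_le_exp_neg β
    _ = Real.exp (-(β * t)) := by rw [← Real.exp_nat_mul]; ring_nf
    _ ≤ Real.exp (-Real.log x) := by gcongr
    _ = x⁻¹ := by rw [Real.exp_neg, Real.exp_log hx]

theorem numArcs_le_of_log_le {m k : ℕ} (hmk : m ≤ k) (hm : m ≤ Fintype.card F)
    (hlog : 2 * (Fintype.card F + 1) * Real.log (Fintype.card F) ≤ (m : ℝ) ^ 2) :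
    numArcs F k ≤ Fintype.card F ^ (5 * m) * (6 * Fintype.card F) ^ k := by
  set q := Fintype.card F
  have hq : 2 ≤ q := Fintype.one_lt_card
  have hm' : (m : ℝ) ≤ 2 * (q + 1) := by exact_mod_cast (by omega : m ≤ 2 * (q + 1))
  have hpow : (1 - (m : ℝ) / (2 * (q + 1))) ^ m ≤ (q : ℝ)⁻¹ := by
    refine one_sub_pow_le_inv (by positivity) (div_le_one_of_le₀ hm' (by positivity)) ?_
    rw [div_mul_eq_mul_div, le_div_iff₀ (by positivity)]
    linarith
  have hexhaust : (q : ℝ) ^ 2 * (1 - m / (2 * (q + 1))) ^ m ≤ 2 * (q + 1) :=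
    calc (q : ℝ) ^ 2 * (1 - m / (2 * (q + 1))) ^ m ≤ (q : ℝ) ^ 2 * (q : ℝ)⁻¹ := by gcongr
      _ = (q : ℝ) := by field_simp
      _ ≤ 2 * (q + 1) := by linarith
  calc numArcs F k
      ≤ (q ^ 2) ^ m * ((q ^ 2 + 1) ^ m * (m + (2 * (q + 1) + m)) ^ k) :=
        numArcs_le hmk (by omega) hexhaust
    _ ≤ (q ^ 2) ^ m * ((q ^ 3) ^ m * (6 * q) ^ k) := by
        gcongr
        · nlinarith
        · omega
    _ = q ^ (5 * m) * (6 * q) ^ k := by ring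

theorem numArcs_le_rpow {m k : ℕ} {γ : ℝ} (hm : m ≤ Fintype.card F)
    (hlog : 2 * (Fintype.card F + 1) * Real.log (Fintype.card F) ≤ (m : ℝ) ^ 2)
    (hmk : m ≤ k) (hmγ : 10 * m ≤ (γ - 1) * k) (hγ : 6 ≤ (Fintype.card F : ℝ) ^ ((γ - 1) / 2)) :
    (numArcs F k : ℝ) ≤ (Fintype.card F : ℝ) ^ (γ * k) := by
  set q := Fintype.card F
  have hq : (1 : ℝ) ≤ q := by exact_mod_cast Fintype.card_pos
  have hfew : (q : ℝ) ^ (5 * m) ≤ (q : ℝ) ^ ((γ - 1) / 2 * k) := by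
    rw [← Real.rpow_natCast]
    refine Real.rpow_le_rpow_of_exponent_le hq ?_
    push_cast
    linarith
  calc (numArcs F k : ℝ) ≤ (q : ℝ) ^ (5 * m) * (6 * q) ^ k := by
        exact_mod_cast numArcs_le_of_log_le hmk hm hlog
    _ ≤ (q : ℝ) ^ ((γ - 1) / 2 * k) * ((q : ℝ) ^ ((γ - 1) / 2) * q) ^ k := by gcongr
    _ = (q : ℝ) ^ (γ * k) := by
        rw [mul_pow, ← Real.rpow_natCast, ← Real.rpow_natCast, ← Real.rpow_mul (by positivity),
          ← Real.rpow_add (by positivity), ← Real.rpow_add (by positivity)]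
        ring_nf

theorem eventually_exists_log_le_sq {ε c : ℝ} (hε : 0 < ε) (hc : 0 < c) :
    ∀ᶠ q : ℕ in atTop, ∃ m : ℕ, m ≤ q ∧ 2 * (q + 1) * Real.log q ≤ (m : ℝ) ^ 2 ∧
      m ≤ c * (q : ℝ) ^ (1 / 2 + ε) := by
  obtain ⟨α, hα, hα'⟩ := exists_between (lt_min hε one_half_pos)
  obtain ⟨hαε, hα_half⟩ := lt_min_iff.mp hα'
  have hlog : ∀ᶠ x : ℝ in atTop, Real.log x ≤ 1 / 4 * x ^ (2 * α) := by
    filter_upwards [(isLittleO_log_rpow_atTop (by positivity : 0 < 2 * α)).bound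
      (by norm_num : (0 : ℝ) < 1 / 4), eventually_ge_atTop 0] with x hx hx₀
    rw [Real.norm_of_nonneg (by positivity : (0 : ℝ) ≤ x ^ (2 * α))] at hx
    exact (Real.le_norm_self _).trans hx
  filter_upwards [tendsto_natCast_atTop_atTop.eventually hlog,
    tendsto_natCast_atTop_atTop.eventually
      ((tendsto_rpow_atTop (sub_pos.mpr hαε)).eventually_ge_atTop (2 / c)),
    eventually_ge_atTop 1] with q hlog hconst hq
  have hq' : (1 : ℝ) ≤ q := by exact_mod_cast hq
  refine ⟨⌈(q : ℝ) ^ (1 / 2 + α)⌉₊, Nat.ceil_le.mpr ?_, ?_, ?_⟩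
  · exact Real.rpow_le_self_of_one_le hq' (by linarith)
  · calc 2 * (q + 1) * Real.log q ≤ 2 * (q + q) * (1 / 4 * (q : ℝ) ^ (2 * α)) := by
          gcongr
      _ = ((q : ℝ) ^ (1 / 2 + α)) ^ 2 := by
          rw [← Real.rpow_mul_natCast (by positivity), show (1 / 2 + α) * (2 : ℕ) = 1 + 2 * α by
            push_cast; ring, Real.rpow_add (by positivity), Real.rpow_one]
          ring
      _ ≤ _ := by gcongr; exact Nat.le_ceil _
  · calc (⌈(q : ℝ) ^ (1 / 2 + α)⌉₊ : ℝ) ≤ 2 * (q : ℝ) ^ (1 / 2 + α) :=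
          Nat.ceil_le_two_mul (by linarith [Real.one_le_rpow hq' (by positivity : 0 ≤ 1 / 2 + α)])
      _ = c * ((q : ℝ) ^ (1 / 2 + α) * (2 / c)) := by field_simp
      _ ≤ c * ((q : ℝ) ^ (1 / 2 + α) * (q : ℝ) ^ (ε - α)) := by gcongr
      _ = c * (q : ℝ) ^ (1 / 2 + ε) := by rw [← Real.rpow_add (by positivity)]; ring_nf

theorem eventually_numArcs_le {ε γ : ℝ} (hε : 0 < ε) (hγ : 1 < γ) :
    ∀ᶠ q : ℕ in atTop, ∀ (F : Type*) [Field F] [Fintype F], Fintype.card F = q →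
      ∀ k : ℕ, (q : ℝ) ^ (1 / 2 + ε) ≤ k → (numArcs F k : ℝ) ≤ (q : ℝ) ^ (γ * k) := by
  have hγ' : 0 < γ - 1 := sub_pos.mpr hγ
  filter_upwards [eventually_exists_log_le_sq hε (by positivity : 0 < min 1 ((γ - 1) / 10)),
    tendsto_natCast_atTop_atTop.eventually
      ((tendsto_rpow_atTop (half_pos hγ')).eventually_ge_atTop 6)] with q hm hconst
  rintro F _ _ rfl k hk
  obtain ⟨m, hmq, hlog, hm⟩ := hm
  have hmk : (m : ℝ) ≤ min 1 ((γ - 1) / 10) * k := hm.trans (by gcongr)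
  rw [min_mul_of_nonneg _ _ (Nat.cast_nonneg k), le_min_iff, one_mul] at hmk
  exact numArcs_le_rpow hmq hlog (by exact_mod_cast hmk.1) (by linarith [hmk.2]) hconst

end ArcAsymptotics

section Alteration

variable {V : Type*} [DecidableEq V]

theorem exists_subset_avoiding {𝓓 : Finset (Finset V)} (h𝓓 : ∀ S ∈ 𝓓, S.Nonempty) (Q : Finset V) :
    ∃ P ⊆ Q, (∀ S ∈ 𝓓, ¬ S ⊆ P) ∧ #Q ≤ #P + #{S ∈ 𝓓 | S ⊆ Q} := by
  choose point hpoint using h𝓓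
  let deleted : Finset V :=
    {S ∈ 𝓓 | S ⊆ Q}.attach.image fun S : {S // S ∈ {S ∈ 𝓓 | S ⊆ Q}} =>
      point S (mem_filter.mp S.2).1
  refine ⟨Q \ deleted, sdiff_subset, fun S hS hSP => ?_, ?_⟩
  · have hSQ : S ∈ ({S ∈ 𝓓 | S ⊆ Q} : Finset (Finset V)) :=
      mem_filter.mpr ⟨hS, hSP.trans sdiff_subset⟩
    exact (mem_sdiff.mp (hSP (hpoint S hS))).2 (mem_image_of_mem _ (mem_attach _ ⟨S, hSQ⟩))
  · have hdeleted : #deleted ≤ #{S ∈ 𝓓 | S ⊆ Q} := card_image_le.trans card_attach.le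
    have hsdiff : #Q - #deleted ≤ #(Q \ deleted) := le_card_sdiff _ _
    omega

variable [Fintype V] {p : ℝ}

/-- The probability that the random subset of `V` containing each point independently with
probability `p` equals `Q`. -/
def bernoulliWeight (p : ℝ) (Q : Finset V) : ℝ :=
  p ^ #Q * (1 - p) ^ #Qᶜ

theorem bernoulliWeight_nonneg (hp₀ : 0 ≤ p) (hp₁ : p ≤ 1) (Q : Finset V) :
    0 ≤ bernoulliWeight p Q := by
  have : 0 ≤ 1 - p := sub_nonneg.mpr hp₁
  unfold bernoulliWeight
  positivity

theorem sum_bernoulliWeight_superset (p : ℝ) (S : Finset V) :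
    ∑ Q with S ⊆ Q, bernoulliWeight p Q = p ^ #S := by
  calc ∑ Q with S ⊆ Q, bernoulliWeight p Q
      = ∑ Q, (∏ _v ∈ Q, p) * ∏ v ∈ Qᶜ, if v ∈ S then 0 else 1 - p := by
        rw [sum_filter]
        refine sum_congr rfl fun Q _ => ?_
        split_ifs with hSQ
        · rw [prod_const, prod_congr rfl fun v hv =>
            if_neg fun hvS => mem_compl.mp hv (hSQ hvS), prod_const, bernoulliWeight]
        · obtain ⟨v, hvS, hvQ⟩ := not_subset.mp hSQ
          have hzero : ∏ v ∈ Qᶜ, (if v ∈ S then 0 else 1 - p) = 0 :=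
            prod_eq_zero (mem_compl.mpr hvQ) (if_pos hvS)
          rw [hzero, mul_zero]
    _ = ∏ v, (p + if v ∈ S then 0 else 1 - p) := (Fintype.prod_add _ _).symm
    _ = ∏ v, if v ∈ S then p else 1 := by
        refine prod_congr rfl fun v _ => ?_
        split_ifs <;> ring
    _ = p ^ #S := by simp

theorem sum_bernoulliWeight (p : ℝ) : ∑ Q : Finset V, bernoulliWeight p Q = 1 := by
  simpa using sum_bernoulliWeight_superset p (∅ : Finset V)

theorem sum_bernoulliWeight_mul_card (p : ℝ) {ι : Type*} (I : Finset ι) (f : ι → Finset V) :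
    ∑ Q, bernoulliWeight p Q * #{i ∈ I | f i ⊆ Q} = ∑ i ∈ I, p ^ #(f i) := by
  simp only [← sum_bernoulliWeight_superset, sum_filter, card_filter, Nat.cast_sum, mul_sum]
  rw [sum_comm]
  simp

theorem exists_sum_bernoulliWeight_mul_le (hp₀ : 0 ≤ p) (hp₁ : p ≤ 1) (X : Finset V → ℝ) :
    ∃ Q, ∑ R, bernoulliWeight p R * X R ≤ X Q := by
  obtain ⟨Q, -, hQ⟩ := exists_max_image univ X univ_nonempty
  refine ⟨Q, ?_⟩
  calc ∑ R, bernoulliWeight p R * X R ≤ ∑ R, bernoulliWeight p R * X Q :=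
        sum_le_sum fun R hR =>
          mul_le_mul_of_nonneg_left (hQ R hR) (bernoulliWeight_nonneg hp₀ hp₁ R)
    _ = X Q := by rw [← sum_mul, sum_bernoulliWeight, one_mul]

theorem exists_alteration (hp₀ : 0 ≤ p) (hp₁ : p ≤ 1) {μ : ℝ} (hμ : 0 ≤ μ)
    {𝓓 : Finset (Finset V)} (h𝓓 : ∀ S ∈ 𝓓, S.Nonempty) (𝓣 : Finset (Finset V)) :
    ∃ P, (∀ S ∈ 𝓓, ¬ S ⊆ P) ∧
      Fintype.card V * p - ∑ S ∈ 𝓓, p ^ #S - μ * ∑ S ∈ 𝓣, p ^ #S ≤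
        #P - μ * #{S ∈ 𝓣 | S ⊆ P} := by
  obtain ⟨Q, hQ⟩ := exists_sum_bernoulliWeight_mul_le hp₀ hp₁
    fun Q : Finset V => (#Q - #{S ∈ 𝓓 | S ⊆ Q} - μ * #{S ∈ 𝓣 | S ⊆ Q} : ℝ)
  obtain ⟨P, hPQ, havoid, hcard⟩ := exists_subset_avoiding h𝓓 Q
  refine ⟨P, havoid, ?_⟩
  have hsize : ∑ Q : Finset V, bernoulliWeight p Q * #Q = Fintype.card V * p := by
    simpa using sum_bernoulliWeight_mul_card p univ fun v : V => {v}
  have hexpect : ∑ Q : Finset V, bernoulliWeight p Q *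
      (#Q - #{S ∈ 𝓓 | S ⊆ Q} - μ * #{S ∈ 𝓣 | S ⊆ Q}) =
      Fintype.card V * p - ∑ S ∈ 𝓓, p ^ #S - μ * ∑ S ∈ 𝓣, p ^ #S := by
    simp only [mul_sub, sum_sub_distrib, mul_left_comm _ μ, ← mul_sum, hsize,
      sum_bernoulliWeight_mul_card p _ fun S => S]
  have hmono : #{S ∈ 𝓣 | S ⊆ P} ≤ #{S ∈ 𝓣 | S ⊆ Q} := by
    gcongr
  have hcard' : (#Q : ℝ) ≤ #P + #{S ∈ 𝓓 | S ⊆ Q} := by exact_mod_cast hcard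
  have hmono' : μ * (#{S ∈ 𝓣 | S ⊆ P} : ℝ) ≤ μ * #{S ∈ 𝓣 | S ⊆ Q} := by gcongr
  linarith

end Alteration

section Construction

variable {F : Type*} [Field F]

theorem IsArc.mono_s10 {A B : Set (F × F)} (hB : IsArc F B) (hAB : A ⊆ B) : IsArc F A :=
  fun a ha b hb c hc => hB a (hAB ha) b (hAB hb) c (hAB hc)

theorem maxArc_lt {P : Finset (F × F)} {k : ℕ} (h : ∀ A ⊆ P, #A = k → ¬ IsArc F (A : Set (F × F))) :
    maxArc F P < k := by
  obtain ⟨A, hAP, hA, harc⟩ : maxArc F P ∈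
      {k : ℕ | ∃ s : Finset (F × F), s ⊆ P ∧ s.card = k ∧ IsArc F ↑s} := by
    refine Nat.sSup_mem ⟨0, ∅, empty_subset P, card_empty, by simp [IsArc]⟩ ⟨#P, ?_⟩
    rintro _ ⟨s, hs, rfl, -⟩
    exact card_le_card hs
  by_contra! hk
  obtain ⟨B, hBA, hB⟩ := exists_subset_card_eq (hk.trans_eq hA.symm)
  exact h B (hBA.trans hAP) hB (harc.mono_s10 (coe_subset.mpr hBA))

variable [Fintype F]

open Classical in
theorem numCollinearTriples_eq_card (P : Finset (F × F)) :
    numCollinearTriples F P =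
      #{S ∈ ({A | #A = 3 ∧ Collinear F (A : Set (F × F))} : Finset (Finset (F × F))) | S ⊆ P} := by
  rw [numCollinearTriples, Nat.card_eq_fintype_card, Fintype.card_subtype, filter_filter]
  congr! 2 with A
  tauto

open Classical in
theorem sum_collinear_pow_card_le {p : ℝ} (hp : 0 ≤ p) {j : ℕ} (hj : 2 ≤ j) :
    ∑ A : Finset (F × F) with #A = j ∧ Collinear F (A : Set (F × F)), p ^ #A ≤
      (Fintype.card F : ℝ) ^ (j + 2) * p ^ j := by
  obtain ⟨i, rfl⟩ := Nat.exists_eq_add_of_le' hj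
  have hcount : #{A : Finset (F × F) | #A = i + 2 ∧ Collinear F (A : Set (F × F))} ≤
      Fintype.card F ^ (i + 2 + 2) :=
    (card_collinear_le i).trans_eq (by rw [Fintype.card_prod]; ring)
  rw [sum_congr rfl fun A hA => by rw [(mem_filter.mp hA).2.1], sum_const, nsmul_eq_mul]
  gcongr
  exact_mod_cast hcount

open Classical in
theorem sum_arc_pow_card (p : ℝ) (k : ℕ) :
    ∑ A : Finset (F × F) with #A = k ∧ IsArc F (A : Set (F × F)), p ^ #A = numArcs F k * p ^ k := by
  rw [sum_congr rfl fun A hA => by rw [(mem_filter.mp hA).2.1], sum_const, nsmul_eq_mul,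
    numArcs_eq_card]

theorem exists_noLCollinear {l k : ℕ} {p μ : ℝ} (hl : 2 ≤ l) (hk : 0 < k) (hp₀ : 0 ≤ p)
    (hp₁ : p ≤ 1) (hμ : 0 ≤ μ) :
    ∃ P : Finset (F × F), NoLCollinear F l P ∧ maxArc F P < k ∧
      (Fintype.card F : ℝ) ^ 2 * p - (Fintype.card F : ℝ) ^ (l + 2) * p ^ l - numArcs F k * p ^ k -
        μ * ((Fintype.card F : ℝ) ^ 5 * p ^ 3) ≤ #P - μ * numCollinearTriples F P := by
  classical
  set 𝓛 : Finset (Finset (F × F)) := {A | #A = l ∧ Collinear F (A : Set (F × F))}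
  set 𝓐 : Finset (Finset (F × F)) := {A | #A = k ∧ IsArc F (A : Set (F × F))}
  have hnonempty : ∀ A ∈ 𝓛 ∪ 𝓐, A.Nonempty := by
    simp only [𝓛, 𝓐, mem_union, mem_filter, ← card_pos]
    omega
  obtain ⟨P, havoid, hP⟩ := exists_alteration hp₀ hp₁ hμ hnonempty
    {A | #A = 3 ∧ Collinear F (A : Set (F × F))}
  refine ⟨P, fun A hAP hA hcol => ?_, maxArc_lt fun A hAP hA harc => ?_, ?_⟩
  · exact havoid A (mem_union_left _ (mem_filter.mpr ⟨mem_univ A, hA, hcol⟩)) hAP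
  · exact havoid A (mem_union_right _ (mem_filter.mpr ⟨mem_univ A, hA, harc⟩)) hAP
  have hunion : ∑ A ∈ 𝓛 ∪ 𝓐, p ^ #A ≤
      (Fintype.card F : ℝ) ^ (l + 2) * p ^ l + numArcs F k * p ^ k :=
    calc ∑ A ∈ 𝓛 ∪ 𝓐, p ^ #A ≤ ∑ A ∈ 𝓛, p ^ #A + ∑ A ∈ 𝓐, p ^ #A := by
          rw [← sum_union_inter]
          exact le_add_of_nonneg_right (sum_nonneg fun A _ => by positivity)
      _ ≤ _ := add_le_add (sum_collinear_pow_card_le hp₀ hl) (sum_arc_pow_card p k).le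
  have htriples : μ * ∑ A : Finset (F × F) with #A = 3 ∧ Collinear F (A : Set (F × F)), p ^ #A ≤
      μ * ((Fintype.card F : ℝ) ^ 5 * p ^ 3) := by
    gcongr
    exact sum_collinear_pow_card_le hp₀ (by norm_num)
  rw [← numCollinearTriples_eq_card, Fintype.card_prod, Nat.cast_mul, ← sq] at hP
  linarith

end Construction

section Parameters

/-- The density at which a random subset of the plane over a field with `x` elements is expected to
contain fewer collinear `l`-sets than points, by a constant factor. -/
noncomputable def deletionDensity (x l : ℝ) : ℝ :=
  x ^ (-(l / (l - 1))) / 2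

variable {x l : ℝ}

theorem pow_mul_deletionDensity_pow (hx : 0 < x) (l : ℝ) (i j : ℕ) :
    x ^ i * deletionDensity x l ^ j = x ^ (i - j * (l / (l - 1))) / 2 ^ j := by
  rw [deletionDensity, div_pow, ← Real.rpow_mul_natCast hx.le, ← Real.rpow_natCast x i,
    mul_div_assoc', ← Real.rpow_add hx]
  ring_nf

theorem deletionDensity_nonneg (hx : 0 ≤ x) (l : ℝ) : 0 ≤ deletionDensity x l := by
  unfold deletionDensity
  positivity

theorem deletionDensity_le_one (hx : 1 ≤ x) (hl : 1 < l) : deletionDensity x l ≤ 1 := by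
  have hexp : 0 < l / (l - 1) := div_pos (by linarith) (by linarith)
  have hle : x ^ (-(l / (l - 1))) ≤ 1 := Real.rpow_le_one_of_one_le_of_nonpos hx (by linarith)
  unfold deletionDensity
  linarith

theorem pow_mul_deletionDensity_pow_le (hx : 0 < x) {l : ℕ} (hl : 4 ≤ l) :
    x ^ (l + 2) * deletionDensity x l ^ l ≤ x ^ (2 - (l : ℝ) / (l - 1)) / 16 := by
  have hl₁ : (l : ℝ) - 1 ≠ 0 := sub_ne_zero.mpr (by exact_mod_cast (by omega : l ≠ 1))
  calc x ^ (l + 2) * deletionDensity x l ^ l = x ^ (2 - (l : ℝ) / (l - 1)) / 2 ^ l := by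
        rw [pow_mul_deletionDensity_pow hx]
        congr 2
        push_cast
        field_simp
        ring
    _ ≤ x ^ (2 - (l : ℝ) / (l - 1)) / 2 ^ 4 := by gcongr; norm_num
    _ = x ^ (2 - (l : ℝ) / (l - 1)) / 16 := by norm_num

theorem rpow_mul_deletionDensity_pow (hx : 0 < x) (l : ℝ) (k : ℕ) :
    x ^ (l / (l - 1) * k) * deletionDensity x l ^ k = 1 / 2 ^ k := by
  have hpow : deletionDensity x l ^ k = x ^ (-(k * (l / (l - 1)))) / 2 ^ k := by
    simpa using pow_mul_deletionDensity_pow hx l 0 k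
  rw [hpow, mul_div_assoc', ← Real.rpow_add hx, mul_comm (k : ℝ), add_neg_cancel, Real.rpow_zero]

theorem rpow_mul_pow_five_mul_deletionDensity_pow_three (hx : 0 < x) (hl : l ≠ 1) :
    x ^ (-((l - 3) / (l - 1))) * (x ^ 5 * deletionDensity x l ^ 3) = x ^ (2 - l / (l - 1)) / 8 := by
  have hl₁ : l - 1 ≠ 0 := sub_ne_zero.mpr hl
  rw [pow_mul_deletionDensity_pow hx, mul_div_assoc', ← Real.rpow_add hx]
  congr 2
  · push_cast
    field_simp
    ring
  · norm_num

theorem exists_noLCollinear_of_numArcs_le {F : Type*} [Field F] [Fintype F] {l k : ℕ} (hl : 4 ≤ l)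
    (hk : 0 < k) (harcs : (numArcs F k : ℝ) ≤ (Fintype.card F : ℝ) ^ ((l : ℝ) / (l - 1) * k))
    (hq : 16 ≤ (Fintype.card F : ℝ) ^ (2 - (l : ℝ) / (l - 1))) :
    ∃ P : Finset (F × F), NoLCollinear F l P ∧ maxArc F P < k ∧
      1 / 4 * (Fintype.card F : ℝ) ^ (2 - (l : ℝ) / (l - 1)) ≤
        #P - (Fintype.card F : ℝ) ^ (-(((l : ℝ) - 3) / (l - 1))) * numCollinearTriples F P := by
  set x := (Fintype.card F : ℝ)
  have hx : 1 ≤ x := Nat.one_le_cast.mpr Fintype.card_pos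
  have hx₀ : 0 < x := by linarith
  have hl₁ : (1 : ℝ) < l := Nat.one_lt_cast.mpr (by omega)
  have hp₀ : 0 ≤ deletionDensity x l := deletionDensity_nonneg hx₀.le l
  have hpoints : x ^ 2 * deletionDensity x l = x ^ (2 - (l : ℝ) / (l - 1)) / 2 := by
    simpa using pow_mul_deletionDensity_pow hx₀ l 2 1
  have hfew : numArcs F k * deletionDensity x l ^ k ≤ 1 :=
    calc numArcs F k * deletionDensity x l ^ k
        ≤ x ^ ((l : ℝ) / (l - 1) * k) * deletionDensity x l ^ k := by gcongr
      _ = 1 / 2 ^ k := rpow_mul_deletionDensity_pow hx₀ l k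
      _ ≤ 1 := div_le_one_of_le₀ (one_le_pow₀ one_le_two) (by positivity)
  have hlines := pow_mul_deletionDensity_pow_le hx₀ hl
  have htriples := rpow_mul_pow_five_mul_deletionDensity_pow_three hx₀ hl₁.ne'
  obtain ⟨P, hcol, harc, hP⟩ := exists_noLCollinear (F := F) (by omega : 2 ≤ l) hk hp₀
    (deletionDensity_le_one hx hl₁) (by positivity : 0 ≤ x ^ (-(((l : ℝ) - 3) / (l - 1))))
  exact ⟨P, hcol, harc, by linarith⟩

theorem rpow_le_rpow_of_mul_rpow_le {δ N : ℝ} (hl : 2 < l) (hx : 0 < x) (hδ : 0 < δ)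
    (hconst : 4 ^ ((l - 1) / (l - 2) * (1 / 2 + δ)) ≤ x ^ (δ / 2))
    (hN : 1 / 4 * x ^ (2 - l / (l - 1)) ≤ N) :
    x ^ (1 / 2 + δ / 2) ≤ N ^ ((l - 1) / (l - 2) * (1 / 2 + δ)) := by
  set s := (l - 1) / (l - 2) * (1 / 2 + δ) with hs
  have hl₁ : 0 < l - 1 := by linarith
  have hl₂ : 0 < l - 2 := by linarith
  have hxs : (x ^ (2 - l / (l - 1))) ^ s = x ^ (1 / 2 + δ / 2) * x ^ (δ / 2) := by
    rw [← Real.rpow_mul hx.le, ← Real.rpow_add hx, hs]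
    congr 1
    field_simp
    ring
  calc x ^ (1 / 2 + δ / 2) = (1 / 4) ^ s * (4 ^ s * x ^ (1 / 2 + δ / 2)) := by
        rw [← mul_assoc, ← Real.mul_rpow (by norm_num) (by norm_num)]
        norm_num
    _ ≤ (1 / 4) ^ s * (x ^ (δ / 2) * x ^ (1 / 2 + δ / 2)) := by gcongr
    _ = (1 / 4 * x ^ (2 - l / (l - 1))) ^ s := by
        rw [Real.mul_rpow (by norm_num) (by positivity), hxs, mul_comm (x ^ (δ / 2))]
    _ ≤ N ^ s := by gcongr

theorem le_mul_rpow_of_mul_rpow_le_sub {N T : ℝ} (hl : 3 ≤ l) (hx : 0 < x) (hT : 0 ≤ T)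
    (hN : 1 / 4 * x ^ (2 - l / (l - 1)) ≤ N - x ^ (-((l - 3) / (l - 1))) * T) :
    T ≤ 4 * N ^ ((2 * l - 5) / (l - 2)) := by
  have hl₁ : 0 < l - 1 := by linarith
  have hl₂ : 0 < l - 2 := by linarith
  have : 0 ≤ l - 3 := by linarith
  have hy : 0 < x ^ (2 - l / (l - 1)) := by positivity
  have hμT : 0 ≤ x ^ (-((l - 3) / (l - 1))) * T := by positivity
  have hN₀ : 0 < N := by linarith
  have hexp : (l - 3) / (l - 2) ≤ 1 := div_le_one_of_le₀ (by linarith) hl₂.le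
  calc T = x ^ ((l - 3) / (l - 1)) * (x ^ (-((l - 3) / (l - 1))) * T) := by
        rw [← mul_assoc, ← Real.rpow_add hx]
        simp
    _ ≤ x ^ ((l - 3) / (l - 1)) * N := by gcongr; linarith
    _ = (x ^ (2 - l / (l - 1))) ^ ((l - 3) / (l - 2)) * N := by
        rw [← Real.rpow_mul hx.le]
        congr 2
        field_simp
        ring
    _ ≤ (4 * N) ^ ((l - 3) / (l - 2)) * N := by gcongr; linarith
    _ = 4 ^ ((l - 3) / (l - 2)) * (N ^ ((l - 3) / (l - 2)) * N ^ (1 : ℝ)) := by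
        rw [Real.mul_rpow (by norm_num) hN₀.le, Real.rpow_one, mul_assoc]
    _ = 4 ^ ((l - 3) / (l - 2)) * N ^ ((2 * l - 5) / (l - 2)) := by
        rw [← Real.rpow_add hN₀]
        congr 2
        field_simp
        ring
    _ ≤ 4 * N ^ ((2 * l - 5) / (l - 2)) := by
        gcongr
        exact Real.rpow_le_self_of_one_le (by norm_num) hexp

end Parameters

theorem no_l_collinear_construction :
    ∀ l : ℕ, 4 ≤ l → ∀ δ : ℝ, 0 < δ → ∃ c C : ℝ, 0 < c ∧ 0 < C ∧ ∃ q₀ : ℕ,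
      ∀ (F : Type) [Field F] [Fintype F], q₀ ≤ Fintype.card F →
      ∃ P : Finset (F × F),
        c * (Fintype.card F : ℝ) ^ ((2 : ℝ) - (l : ℝ) / ((l : ℝ) - 1)) ≤ (P.card : ℝ) ∧
        NoLCollinear F l P ∧
        (maxArc F P : ℝ) ≤
          (P.card : ℝ) ^ ((((l : ℝ) - 1) / ((l : ℝ) - 2)) * ((1 : ℝ) / 2 + δ)) ∧
        (numCollinearTriples F P : ℝ) ≤
          C * (P.card : ℝ) ^ ((2 * (l : ℝ) - 5) / ((l : ℝ) - 2)) := by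
  intro l hl δ hδ
  have hl' : (4 : ℝ) ≤ l := by exact_mod_cast hl
  have hdens : 1 < (l : ℝ) / (l - 1) := (one_lt_div (by linarith)).mpr (by linarith)
  have hdens' : 0 < 2 - (l : ℝ) / (l - 1) := sub_pos.mpr <|
    (div_lt_iff₀ (by linarith)).mpr (by linarith)
  have hlarge {e : ℝ} (he : 0 < e) (B : ℝ) : ∀ᶠ q : ℕ in Filter.atTop, B ≤ (q : ℝ) ^ e :=
    tendsto_natCast_atTop_atTop.eventually ((tendsto_rpow_atTop he).eventually_ge_atTop B)
  obtain ⟨q₀, hq₀⟩ := Filter.eventually_atTop.mp <|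
    (eventually_numArcs_le (half_pos hδ) hdens).and <| (hlarge hdens' 16).and <|
      hlarge (half_pos hδ) (4 ^ (((l : ℝ) - 1) / (l - 2) * (1 / 2 + δ)))
  refine ⟨1 / 4, 4, by norm_num, by norm_num, q₀, fun F _ _ hq => ?_⟩
  obtain ⟨harcs, h16, hconst⟩ := hq₀ _ hq
  have hq₁ : (0 : ℝ) < Fintype.card F := by exact_mod_cast Fintype.card_pos
  obtain ⟨P, hcol, harc, hP⟩ := exists_noLCollinear_of_numArcs_le hl
    (Nat.ceil_pos.mpr (by positivity)) (harcs F rfl _ (Nat.le_ceil _)) h16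
  have hcard := hP.trans (sub_le_self _ (by positivity))
  exact ⟨P, hcard, hcol,
    (Nat.lt_ceil.mp harc).le.trans (rpow_le_rpow_of_mul_rpow_le (by linarith) hq₁ hδ hconst hcard),
    le_mul_rpow_of_mul_rpow_le_sub (by linarith) hq₁ (Nat.cast_nonneg _) hP⟩
end

section
/- There exists an absolute constant c > 0 such that for every finite field F, every integer l ≥ 4, and every finite subset P ⊆ F² containing no l distinct collinear points, one has a(P) ≥ c · |P|^{1/2} / l^{1/2}. -/
/-!
Let `S` be a finite set of points with no `l` of them collinear, and let `A ⊆ S` be an arc contained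
in no larger arc inside `S`. Adding any further point of `S` to `A` creates a collinear triple, so
every point of `S` lies on a line through two points of `A` (for a point of `A`, the degenerate line
through itself). There are at most `|A|²` such lines and each meets `S` in fewer than `l` points,
hence `|S| ≤ |A|² l`.
-/

open Finset MeasureTheory
open scoped NNReal ENNReal

section AffineSpace

variable {k V P : Type*} [DivisionRing k] [AddCommGroup V] [Module k V] [AddTorsor V P]

variable (k) in
/-- An arc in an affine space over `k`: a set without three distinct collinear points. Over
`P = F × F` this unfolds to `IsArc`. -/
def IsAffineArc (s : Set P) : Prop :=
  ∀ a ∈ s, ∀ b ∈ s, ∀ c ∈ s, a ≠ b → a ≠ c → b ≠ c → ¬ Collinear k {a, b, c}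

variable (k) in
/-- `A` is a complete arc in `S`: an arc contained in `S` and in no larger such arc. Maximality is
with respect to inclusion, so `A` need not have the largest possible cardinality. -/
def IsCompleteArcIn (S A : Set P) : Prop :=
  Maximal (fun B : Set P => B ⊆ S ∧ IsAffineArc k B) A

variable (k) in
theorem exists_isCompleteArcIn (S : Finset P) :
    ∃ A : Finset P, IsCompleteArcIn k (S : Set P) (A : Set P) := by
  have hfin : {B : Set P | B ⊆ S ∧ IsAffineArc k B}.Finite :=
    S.finite_toSet.finite_subsets.subset fun _ hB => hB.1
  obtain ⟨A, hA⟩ := hfin.exists_maximal ⟨∅, Set.empty_subset _, fun _ ha => ha.elim⟩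
  lift A to Finset P using S.finite_toSet.subset hA.prop.1
  exact ⟨A, hA⟩

theorem IsAffineArc.exists_mem_line_of_not_insert {A : Set P} {p : P} (hA : IsAffineArc k A)
    (hp : ¬ IsAffineArc k (insert p A)) : ∃ a ∈ A, ∃ b ∈ A, p ∈ line[k, a, b] := by
  unfold IsAffineArc at hp
  push Not at hp
  obtain ⟨x, hx, y, hy, z, hz, hxy, hxz, hyz, hcol⟩ := hp
  rcases hx with rfl | hx
  · exact ⟨y, hy.resolve_left hxy.symm, z, hz.resolve_left hxz.symm,
      hcol.mem_affineSpan_of_mem_of_ne (by simp) (by simp) (by simp) hyz⟩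
  rcases hy with rfl | hy
  · exact ⟨x, hx, z, hz.resolve_left hyz.symm,
      hcol.mem_affineSpan_of_mem_of_ne (by simp) (by simp) (by simp) hxz⟩
  rcases hz with rfl | hz
  · exact ⟨x, hx, y, hy, hcol.mem_affineSpan_of_mem_of_ne (by simp) (by simp) (by simp) hxy⟩
  · exact absurd hcol (hA x hx y hy z hz hxy hxz hyz)

theorem IsCompleteArcIn.exists_mem_line {S A : Set P} (hA : IsCompleteArcIn k S A) {p : P}
    (hp : p ∈ S) : ∃ a ∈ A, ∃ b ∈ A, p ∈ line[k, a, b] := by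
  by_cases hpA : p ∈ A
  · exact ⟨p, hpA, p, hpA, left_mem_affineSpan_pair k p p⟩
  · refine hA.prop.2.exists_mem_line_of_not_insert fun hins => hpA ?_
    exact Maximal.mem_of_prop_insert hA ⟨Set.insert_subset hp hA.prop.1, hins⟩

theorem collinear_affineSpan_iff {s : Set P} :
    Collinear k (affineSpan k s : Set P) ↔ Collinear k s := by
  rw [Collinear, Collinear, ← direction_affineSpan k s, AffineSubspace.direction]

theorem card_lt_of_collinear {l : ℕ} {S T : Finset P}
    (hS : ∀ s ⊆ S, s.card = l → ¬ Collinear k (s : Set P)) (hTS : T ⊆ S)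
    (hT : Collinear k (T : Set P)) : T.card < l := by
  by_contra! hl
  obtain ⟨s, hsT, hs⟩ := Finset.exists_subset_card_eq hl
  exact hS s (hsT.trans hTS) hs (hT.subset (Finset.coe_subset.2 hsT))

open Classical in
theorem card_filter_mem_line_lt {l : ℕ} {S : Finset P}
    (hS : ∀ s ⊆ S, s.card = l → ¬ Collinear k (s : Set P)) (a b : P) :
    (S.filter (· ∈ line[k, a, b])).card < l :=
  card_lt_of_collinear hS (Finset.filter_subset _ _) <|
    (collinear_affineSpan_iff.2 (collinear_pair k a b)).subset
      fun _ hp => (Finset.mem_filter.1 hp).2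

open Classical in
theorem IsCompleteArcIn.card_le_sq_mul {l : ℕ} {S A : Finset P}
    (hA : IsCompleteArcIn k (S : Set P) (A : Set P))
    (hS : ∀ s ⊆ S, s.card = l → ¬ Collinear k (s : Set P)) : S.card ≤ A.card ^ 2 * l := by
  have hcover : S ⊆ (A ×ˢ A).biUnion fun q => S.filter (· ∈ line[k, q.1, q.2]) := fun p hp => by
    obtain ⟨a, ha, b, hb, hab⟩ := hA.exists_mem_line hp
    exact Finset.mem_biUnion.2 ⟨(a, b), Finset.mk_mem_product ha hb, Finset.mem_filter.2 ⟨hp, hab⟩⟩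
  calc
    S.card ≤ _ := Finset.card_le_card hcover
    _ ≤ (A ×ˢ A).card * l :=
      Finset.card_biUnion_le_card_mul _ _ _ fun q _ => (card_filter_mem_line_lt hS q.1 q.2).le
    _ = A.card ^ 2 * l := by rw [Finset.card_product, sq]

theorem arc_in_no_l_collinear_general {l : ℕ} {S : Finset P}
    (hS : ∀ s ⊆ S, s.card = l → ¬ Collinear k (s : Set P)) :
    ∃ A ⊆ S, IsAffineArc k (A : Set P) ∧ √(S.card : ℝ) / √(l : ℝ) ≤ A.card := by
  obtain ⟨A, hA⟩ := exists_isCompleteArcIn k S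
  have hcard : (S.card : ℝ) ≤ A.card ^ 2 * l := mod_cast hA.card_le_sq_mul hS
  refine ⟨A, Finset.coe_subset.1 hA.prop.1, hA.prop.2, ?_⟩
  refine div_le_of_le_mul₀ (Real.sqrt_nonneg _) (Nat.cast_nonneg _) (Real.sqrt_le_iff.2 ⟨?_, ?_⟩)
  · positivity
  · rwa [mul_pow, Real.sq_sqrt (Nat.cast_nonneg l)]

end AffineSpace

theorem card_le_maxArc {F : Type*} [Field F] {S A : Finset (F × F)} (hAS : A ⊆ S)
    (hA : IsArc F (A : Set (F × F))) : A.card ≤ maxArc F S := by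
  refine le_csSup ⟨S.card, ?_⟩ ⟨A, hAS, rfl, hA⟩
  rintro _ ⟨B, hBS, rfl, -⟩
  exact Finset.card_le_card hBS

theorem arc_in_no_l_collinear :
    ∃ c : ℝ, 0 < c ∧ ∀ (F : Type) [Field F], ∀ l : ℕ, 4 ≤ l →
      ∀ P : Finset (F × F), NoLCollinear F l P →
      c * Real.sqrt (P.card : ℝ) / Real.sqrt (l : ℝ) ≤ (maxArc F P : ℝ) := by
  refine ⟨1, one_pos, fun F _ l _ P hP => ?_⟩
  obtain ⟨A, hAP, hA, hle⟩ := arc_in_no_l_collinear_general hP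
  simpa only [one_mul] using hle.trans (Nat.cast_le.2 (card_le_maxArc hAP hA))
end
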